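/- arXiv:math/0411414 — 15 statements merged into one kernel-verified Lean document; each statement's English description precedes it below -/
import Mathlib

section
/- Let K be an algebraically closed field of characteristic zero and let f ∈ K[x] be a monic polynomial of degree d ≥ 1 with roots λ_1, …, λ_d (with multiplicity) that is generic, meaning no λ_i is a root of unity and the 2^d products λ_S = ∏_{i∈S} λ_i, taken over all subsets S ⊆ {1,…,d}, are pairwise distinct. If g ∈ K[x] is another generic monic polynomial of degree d whose cyclic resultants satisfy r_m(g) = r_m(f) for all 1 ≤ m ≤ 2^{d+1}, then g = f. -/
open Polynomial

theorem aux_LI {K ι : Type*} [Field K] [DecidableEq K] (P : Finset ι) (c x : ι → K)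
    (h : ∀ n : ℕ, 1 ≤ n → n ≤ P.card → ∑ i ∈ P, c i * x i ^ n = 0) (v : K) (hv : v ≠ 0) :
    ∑ i ∈ P, (if x i = v then c i else 0) = 0 := by
  classical
  by_cases hvx : v ∈ P.image x
  swap
  · apply Finset.sum_eq_zero
    intro i hi
    rw [if_neg]
    rintro rfl
    exact hvx (Finset.mem_image_of_mem x hi)
  set p : K[X] := ∏ w ∈ (P.image x).erase v, (X - C w) with hp
  have hdeg : p.natDegree < P.card := by
    rw [hp, natDegree_prod_of_monic _ _ (fun w _ => monic_X_sub_C w)]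
    simp only [natDegree_X_sub_C, Finset.sum_const, smul_eq_mul, mul_one]
    exact (Finset.card_erase_lt_of_mem hvx).trans_le Finset.card_image_le
  have h1 : ∑ i ∈ P, c i * x i * p.eval (x i) = 0 := by
    simp only [eval_eq_sum_range, Finset.mul_sum]
    rw [Finset.sum_comm]
    apply Finset.sum_eq_zero
    intro k hk
    have := h (k+1) (by omega) (by simp at hk; omega)
    calc _ = p.coeff k * ∑ i ∈ P, c i * x i ^ (k+1) := by
          rw [Finset.mul_sum]; apply Finset.sum_congr rfl; intros; ring
      _ = 0 := by rw [this, mul_zero]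
  have hpv : p.eval v ≠ 0 := by
    rw [hp, eval_prod, Finset.prod_ne_zero_iff]
    intro w hw
    simp only [eval_sub, eval_X, eval_C]
    exact sub_ne_zero.2 (Finset.ne_of_mem_erase hw).symm
  have h2 : (∑ i ∈ P, if x i = v then c i else 0) * (v * p.eval v) = 0 := by
    rw [Finset.sum_mul]
    refine Eq.trans ?_ h1
    apply Finset.sum_congr rfl
    intro i hi
    split_ifs with hiv
    · rw [hiv]; ring
    · have : p.eval (x i) = 0 := by
        rw [hp, eval_prod]
        apply Finset.prod_eq_zero (Finset.mem_erase.2 ⟨hiv, Finset.mem_image_of_mem x hi⟩)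
        simp
      rw [this]; ring
  exact (mul_eq_zero.1 h2).resolve_right (mul_ne_zero hv hpv)

theorem aux_LI2 {K ι κ : Type*} [Field K] [DecidableEq K] (P : Finset ι) (Q : Finset κ) (c x : ι → K)
    (e y : κ → K)
    (h : ∀ n : ℕ, 1 ≤ n → n ≤ P.card + Q.card →
      ∑ i ∈ P, c i * x i ^ n = ∑ i ∈ Q, e i * y i ^ n) (v : K) (hv : v ≠ 0) :
    ∑ i ∈ P, (if x i = v then c i else 0)
      = ∑ i ∈ Q, (if y i = v then e i else 0) := by
  classical
  have := aux_LI (P.disjSum Q) (Sum.elim c (fun j => - e j)) (Sum.elim x y) (by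
    intro n h1 h2
    rw [Finset.card_disjSum] at h2
    rw [Finset.sum_disjSum]
    simp [h n h1 h2]) v hv
  rw [Finset.sum_disjSum] at this
  have this : (∑ i ∈ P, (if x i = v then c i else 0)) + (∑ i ∈ Q, (if y i = v then - e i else 0))
    = 0 := this
  rw [← sub_eq_zero]
  refine Eq.trans ?_ this
  rw [sub_eq_add_neg, ← Finset.sum_neg_distrib]
  congr 1
  apply Finset.sum_congr rfl
  intros; split_ifs <;> simp

theorem aux_LI_ext {K ι : Type*} [Field K] [DecidableEq K] (P : Finset ι) (x : ι → K) (c : ι → K) (n : ℕ) (V : Finset K) (hV : ∀ i ∈ P, x i ∈ V) :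
    ∑ i ∈ P, c i * x i ^ n
      = ∑ v ∈ V, (∑ i ∈ P, (if x i = v then c i else 0)) * v ^ n := by
  classical
  simp only [Finset.sum_mul]
  rw [Finset.sum_comm]
  apply Finset.sum_congr rfl
  intro i hi
  simp [hV i hi]

theorem aux_expand {K ι : Type*} [Field K] (A : Finset ι) (a : ι → K) (n : ℕ) :
    ∏ i ∈ A, (1 - a i ^ n) = ∑ S ∈ A.powerset, (-1) ^ S.card * (∏ i ∈ S, a i) ^ n := by
  classical
  simp only [sub_eq_neg_add]
  rw [Finset.prod_add]
  apply Finset.sum_congr rfl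
  intro S _
  simp [Finset.prod_neg, Finset.prod_pow]

theorem aux_ext {K ι κ : Type*} [Field K] (P : Finset ι) (Q : Finset κ) (c x : ι → K)
    (e y : κ → K)
    (h : ∀ n : ℕ, 1 ≤ n → n ≤ P.card + Q.card →
      ∑ i ∈ P, c i * x i ^ n = ∑ i ∈ Q, e i * y i ^ n) (n : ℕ) (hn : 1 ≤ n) :
      ∑ i ∈ P, c i * x i ^ n = ∑ i ∈ Q, e i * y i ^ n := by
  classical
  rw [aux_LI_ext P x c n (P.image x ∪ Q.image y)
    (fun i hi => Finset.mem_union_left _ (Finset.mem_image_of_mem x hi)),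
    aux_LI_ext Q y e n (P.image x ∪ Q.image y)
    (fun i hi => Finset.mem_union_right _ (Finset.mem_image_of_mem y hi))]
  apply Finset.sum_congr rfl
  intro v _
  by_cases hv : v = 0
  · subst hv
    simp [show n ≠ 0 by omega]
  · rw [aux_LI2 P Q c x e y h v hv]

theorem aux_phi {K : Type*} [Field K] (s : Finset Kˣ) (hs : ∀ x ∈ s, ∀ n : ℕ, 0 < n → x ^ n ≠ 1) :
    ∃ φ : Kˣ →* Multiplicative ℚ, ∀ x ∈ s, φ x ≠ 1 := by
  classical
  have hne : ∀ x ∈ s, TensorProduct.mk ℤ ℚ (Additive Kˣ) 1 (Additive.ofMul x) ≠ 0 := by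
    intro x hx h0
    rw [IsLocalizedModule.eq_zero_iff (nonZeroDivisors ℤ)] at h0
    obtain ⟨c, hc⟩ := h0
    have hc0 : (c : ℤ) ≠ 0 := nonZeroDivisors.ne_zero c.2
    have h1 : x ^ (c : ℤ) = 1 := hc
    refine hs x hx (c : ℤ).natAbs (by omega) ?_
    rw [← zpow_natCast]
    rcases Int.natAbs_eq (c : ℤ) with h | h
    · rw [← h]; exact h1
    · have : (((c : ℤ).natAbs : ℤ)) = - (c : ℤ) := by omega
      rw [this, zpow_neg, h1, inv_one]
  obtain ⟨f, hf⟩ := Module.exists_dual_forall_apply_ne_zero (K := ℚ) 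
    (fun x : s => TensorProduct.mk ℤ ℚ (Additive Kˣ) 1 (Additive.ofMul x.1)) (fun x => hne x.1 x.2)
  refine ⟨AddMonoidHom.toMultiplicative
    (f.toAddMonoidHom.comp (TensorProduct.mk ℤ ℚ (Additive Kˣ) 1).toAddMonoidHom) , ?_⟩
  intro x hx h
  exact hf ⟨x, hx⟩ h

theorem aux_coef {K ι κ : Type*} [Field K] [DecidableEq Kˣ] (A : Finset ι) (B : Finset κ)
    (a : ι → Kˣ) (b : κ → Kˣ) (ε δ : K) (L M : Kˣ)
    (h : ∀ n : ℕ, 1 ≤ n → ε * (L : K) ^ n * ∏ i ∈ A, (1 - (a i : K) ^ n)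
      = δ * (M : K) ^ n * ∏ i ∈ B, (1 - (b i : K) ^ n)) (v : Kˣ) :
    ∑ S ∈ A.powerset, (if L * ∏ i ∈ S, a i = v then ε * (-1) ^ S.card else 0)
     = ∑ S ∈ B.powerset, (if M * ∏ i ∈ S, b i = v then δ * (-1) ^ S.card else 0) := by
  classical
  have := aux_LI2 A.powerset B.powerset (fun S => ε * (-1) ^ S.card)
    (fun S => ((L * ∏ i ∈ S, a i : Kˣ) : K)) (fun S => δ * (-1) ^ S.card)
    (fun S => ((M * ∏ i ∈ S, b i : Kˣ) : K)) (by
      intro n h1 _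
      have h2 := h n h1
      rw [aux_expand, aux_expand, Finset.mul_sum, Finset.mul_sum] at h2
      refine Eq.trans ?_ (h2.trans ?_)
      · apply Finset.sum_congr rfl
        intro S _
        push_cast
        ring
      · apply Finset.sum_congr rfl
        intro S _
        push_cast
        ring) (v : K) v.ne_zero
  simpa only [Units.val_inj] using this

theorem aux_prod_gt {ι G Γ : Type*} [CommGroup G] [CommGroup Γ] [LinearOrder Γ]
    [IsOrderedMonoid Γ] (φ : G →* Γ) (S : Finset ι) (a : ι → G) (ha : ∀ i ∈ S, 1 < φ (a i))
    (hS : S ≠ ∅) : 1 < φ (∏ i ∈ S, a i) := by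
  rw [map_prod]
  exact Finset.one_lt_prod ha (Finset.nonempty_iff_ne_empty.2 hS)

theorem aux_lead {K ι κ Γ : Type*} [Field K] [CommGroup Γ] [LinearOrder Γ]
    [IsOrderedMonoid Γ] (φ : Kˣ →* Γ) (A : Finset ι) (B : Finset κ)
    (a : ι → Kˣ) (b : κ → Kˣ) (ha : ∀ i ∈ A, 1 < φ (a i)) (hb : ∀ i ∈ B, 1 < φ (b i))
    (ε δ : K) (hε : ε ≠ 0) (L M : Kˣ) (hLM : φ L ≤ φ M)
    (h : ∀ n : ℕ, 1 ≤ n → ε * (L : K) ^ n * ∏ i ∈ A, (1 - (a i : K) ^ n)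
      = δ * (M : K) ^ n * ∏ i ∈ B, (1 - (b i : K) ^ n)) : L = M ∧ ε = δ := by
  classical
  have key := aux_coef A B a b ε δ L M h L
  rw [Finset.sum_eq_single ∅, Finset.sum_eq_single ∅] at key
  · simp only [Finset.prod_empty, mul_one, if_true, Finset.card_empty, pow_zero] at key
    split_ifs at key with h1
    · exact ⟨h1.symm, key⟩
    · exact absurd key hε
  · intro S hS hne
    rw [if_neg]
    intro h1
    have h2 := aux_prod_gt φ S b (fun i hi => hb i (Finset.mem_powerset.1 hS hi)) hne
    have h3 : φ L = φ M * φ (∏ i ∈ S, b i) := by rw [← map_mul, h1]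
    have : φ M < φ L := by rw [h3]; exact lt_mul_of_one_lt_right' _ h2
    exact absurd hLM (not_le.2 this)
  · simp
  · intro S hS hne
    rw [if_neg]
    intro h1
    have h2 := aux_prod_gt φ S a (fun i hi => ha i (Finset.mem_powerset.1 hS hi)) hne
    rw [mul_eq_left.1 h1] at h2
    simp at h2
  · simp

theorem aux_single {K ι Γ : Type*} [Field K] [DecidableEq Kˣ] [CommGroup Γ] [LinearOrder Γ]
    [IsOrderedMonoid Γ] (φ : Kˣ →* Γ) (A : Finset ι)
    (a : ι → Kˣ) (ha : ∀ i ∈ A, 1 < φ (a i)) (v : Kˣ) (hv : 1 < φ v)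
    (hmin : ∀ i ∈ A, φ v ≤ φ (a i)) :
    ∑ S ∈ A.powerset, (if 1 * ∏ i ∈ S, a i = v then (1 : K) * (-1) ^ S.card else 0)
      = - ((A.filter (fun i => a i = v)).card : K) := by
  classical
  have hsub : A.image (fun i => ({i} : Finset ι)) ⊆ A.powerset := by
    intro S hS
    obtain ⟨i, hi, rfl⟩ := Finset.mem_image.1 hS
    simpa using hi
  rw [← Finset.sum_subset hsub, Finset.sum_image (by intro i _ j _ h; simpa using h)]
  · simp only [one_mul, Finset.prod_singleton, Finset.card_singleton, pow_one]
    rw [← Finset.sum_filter]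
    simp
  · intro S hS hS2
    rw [if_neg]
    rw [one_mul]
    intro h1
    have hSA := Finset.mem_powerset.1 hS
    have hne : S.Nonempty := by
      rw [Finset.nonempty_iff_ne_empty]
      rintro rfl
      rw [Finset.prod_empty] at h1
      rw [← h1] at hv
      simp at hv
    obtain ⟨i, hi⟩ := hne
    have hne2 : S.erase i ≠ ∅ := by
      intro h0
      apply hS2
      refine Finset.mem_image.2 ⟨i, hSA hi, ?_⟩
      rw [← Finset.insert_erase hi, h0]
      rfl
    have h3 := aux_prod_gt φ (S.erase i) a
      (fun j hj => ha j (hSA (Finset.mem_of_mem_erase hj))) hne2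
    have h4 : φ v = φ (a i) * φ (∏ j ∈ S.erase i, a j) := by
      rw [← h1, ← map_mul, Finset.mul_prod_erase S a hi]
    have : φ (a i) < φ v := by rw [h4]; exact lt_mul_of_one_lt_right' _ h3
    exact absurd (hmin i (hSA hi)) (not_le.2 this)

theorem aux_eq {K ι κ Γ : Type*} [Field K] [CharZero K] [CommGroup Γ] [LinearOrder Γ]
    [IsOrderedMonoid Γ] (φ : Kˣ →* Γ) (a : ι → Kˣ) (b : κ → Kˣ) (N : ℕ) :
    ∀ (A : Finset ι) (B : Finset κ), A.card + B.card = N →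
    (∀ i ∈ A, 1 < φ (a i)) → (∀ i ∈ B, 1 < φ (b i)) →
    (∀ n : ℕ, 1 ≤ n → ∏ i ∈ A, (1 - (a i : K) ^ n) = ∏ i ∈ B, (1 - (b i : K) ^ n)) →
    A.val.map a = B.val.map b := by
  classical
  induction N using Nat.strong_induction_on with
  | _ N ih =>
  intro A B hN ha hb h
  by_cases hN0 : N = 0
  · have hA : A = ∅ := Finset.card_eq_zero.1 (by omega)
    have hB : B = ∅ := Finset.card_eq_zero.1 (by omega)
    subst hA hB; rfl
  -- the minimal element
  have hne : (A.image a ∪ B.image b).Nonempty := by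
    rw [Finset.union_nonempty, Finset.image_nonempty, Finset.image_nonempty]
    by_contra hc
    push Not at hc
    rw [hc.1, hc.2] at hN
    simp at hN
    omega
  obtain ⟨v, hv, hmin⟩ := Finset.exists_min_image _ φ hne
  have hminA : ∀ i ∈ A, φ v ≤ φ (a i) := fun i hi =>
    hmin _ (Finset.mem_union_left _ (Finset.mem_image_of_mem a hi))
  have hminB : ∀ i ∈ B, φ v ≤ φ (b i) := fun i hi =>
    hmin _ (Finset.mem_union_right _ (Finset.mem_image_of_mem b hi))
  have hv1 : 1 < φ v := by
    rcases Finset.mem_union.1 hv with h1 | h1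
    · obtain ⟨i, hi, rfl⟩ := Finset.mem_image.1 h1; exact ha i hi
    · obtain ⟨i, hi, rfl⟩ := Finset.mem_image.1 h1; exact hb i hi
  have key := aux_coef A B a b 1 1 1 1 (by intro n hn; simp [h n hn]) v
  rw [aux_single φ A a ha v hv1 hminA, aux_single φ B b hb v hv1 hminB, neg_inj,
    Nat.cast_inj] at key
  have hpos : 0 < (A.filter (fun i => a i = v)).card ∧ 0 < (B.filter (fun i => b i = v)).card := by
    rcases Finset.mem_union.1 hv with h1 | h1
    · obtain ⟨i, hi, h2⟩ := Finset.mem_image.1 h1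
      have : 0 < (A.filter (fun i => a i = v)).card :=
        Finset.card_pos.2 ⟨i, Finset.mem_filter.2 ⟨hi, h2⟩⟩
      omega
    · obtain ⟨i, hi, h2⟩ := Finset.mem_image.1 h1
      have : 0 < (B.filter (fun i => b i = v)).card :=
        Finset.card_pos.2 ⟨i, Finset.mem_filter.2 ⟨hi, h2⟩⟩
      omega
  obtain ⟨i, hi⟩ := Finset.card_pos.1 hpos.1
  obtain ⟨j, hj⟩ := Finset.card_pos.1 hpos.2
  obtain ⟨hiA, hiv⟩ := Finset.mem_filter.1 hi
  obtain ⟨hjB, hjv⟩ := Finset.mem_filter.1 hj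
  have hvn : ∀ n : ℕ, 1 ≤ n → 1 - (v : K) ^ n ≠ 0 := by
    intro n hn h0
    have h1 : v ^ n = 1 := by
      ext; push_cast; exact (sub_eq_zero.1 h0).symm
    have h2 : 1 < (φ v) ^ n := one_lt_pow' hv1 (by omega)
    rw [← map_pow, h1, map_one] at h2
    exact lt_irrefl _ h2
  have hrec := ih ((A.erase i).card + (B.erase j).card) (by
      rw [Finset.card_erase_of_mem hiA, Finset.card_erase_of_mem hjB]
      have := Finset.card_pos.2 ⟨i, hiA⟩
      omega) (A.erase i) (B.erase j) rfl
      (fun k hk => ha k (Finset.mem_of_mem_erase hk))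
      (fun k hk => hb k (Finset.mem_of_mem_erase hk)) (by
        intro n hn
        have h1 := h n hn
        rw [← Finset.mul_prod_erase A _ hiA, ← Finset.mul_prod_erase B _ hjB, hiv, hjv] at h1
        exact mul_left_cancel₀ (hvn n hn) h1)
  have e1 : A.val = i ::ₘ (A.erase i).val := by
    rw [Finset.erase_val, Multiset.cons_erase hiA]
  have e2 : B.val = j ::ₘ (B.erase j).val := by
    rw [Finset.erase_val, Multiset.cons_erase hjB]
  rw [e1, e2, Multiset.map_cons, Multiset.map_cons, hrec, hiv, hjv]

theorem aux_perm {ι α : Type*} [Fintype ι] (a b : ι → α)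
    (h : Finset.univ.val.map a = Finset.univ.val.map b) :
    ∃ σ : Equiv.Perm ι, ∀ i, b (σ i) = a i := by
  classical
  have hc : ∀ x : α, Fintype.card {i // a i = x} = Fintype.card {i // b i = x} := by
    intro x
    have := congrArg (Multiset.count x) h
    rw [Multiset.count_map, Multiset.count_map] at this
    rw [Fintype.card_subtype, Fintype.card_subtype]
    simpa only [eq_comm, Finset.card_def, Finset.filter_val] using this
  refine ⟨(Equiv.sigmaFiberEquiv a).symm.trans ((Equiv.sigmaCongrRight
    fun x => Fintype.equivOfCardEq (hc x)).trans (Equiv.sigmaFiberEquiv b)), ?_⟩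
  intro i
  exact (Fintype.equivOfCardEq (hc (a i)) ⟨i, rfl⟩).2

theorem aux_flip {K Γ : Type*} [Field K] [CommGroup Γ] [LinearOrder Γ]
    [IsOrderedMonoid Γ] (φ : Kˣ →* Γ) {ι : Type*} [Fintype ι] (l : ι → Kˣ) :
    ∃ ε : K, ε ≠ 0 ∧ ∀ n : ℕ, ∏ i, (1 - (l i : K) ^ n)
      = ε * ((∏ i, (if φ (l i) < 1 then l i else 1) : Kˣ) : K) ^ n *
        ∏ i, (1 - ((if φ (l i) < 1 then (l i)⁻¹ else l i : Kˣ) : K) ^ n) := by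
  refine ⟨∏ i, (if φ (l i) < 1 then -1 else 1), ?_, ?_⟩
  · rw [Finset.prod_ne_zero_iff]
    intro i _
    split_ifs <;> simp
  · intro n
    rw [Units.coe_prod, ← Finset.prod_pow, ← Finset.prod_mul_distrib, ← Finset.prod_mul_distrib]
    apply Finset.prod_congr rfl
    intro i _
    split_ifs
    · have : ((l i : K)) ^ n ≠ 0 := pow_ne_zero _ (l i).ne_zero
      push_cast
      rw [inv_pow]
      field_simp
      ring
    · simp

theorem aux_units {K ι Γ : Type*} [Field K] [CharZero K] [CommGroup Γ] [LinearOrder Γ]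
    [IsOrderedMonoid Γ] (φ : Kˣ →* Γ) [Fintype ι] (l m : ι → Kˣ)
    (hl : ∀ i, φ (l i) ≠ 1) (hm : ∀ i, φ (m i) ≠ 1)
    (hgen : ∀ S : Finset ι, ∏ i ∈ S, l i = 1 → S = ∅)
    (h : ∀ n : ℕ, 1 ≤ n → ∏ i, (1 - (l i : K) ^ n) = ∏ i, (1 - (m i : K) ^ n)) :
    ∃ σ : Equiv.Perm ι, ∀ i, m (σ i) = l i := by
  classical
  obtain ⟨ε, hε, h1⟩ := aux_flip φ l
  obtain ⟨δ, hδ, h2⟩ := aux_flip φ m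
  have pos : ∀ l : ι → Kˣ, (∀ i, φ (l i) ≠ 1) → ∀ i ∈ (Finset.univ : Finset ι),
      1 < φ (if φ (l i) < 1 then (l i)⁻¹ else l i) := by
    intro l hl i _
    split_ifs with hi
    · rw [map_inv]; exact one_lt_inv'.2 hi
    · exact lt_of_le_of_ne (not_lt.1 hi) (hl i).symm
  have h3 : ∀ n : ℕ, 1 ≤ n → _ := fun n hn => ((h1 n).symm.trans ((h n hn).trans (h2 n)))
  have hL : (∏ i, (if φ (l i) < 1 then l i else 1)) = (∏ i, (if φ (m i) < 1 then m i else 1))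
      ∧ ε = δ := by
    rcases le_total (φ (∏ i, (if φ (l i) < 1 then l i else 1)))
      (φ (∏ i, (if φ (m i) < 1 then m i else 1))) with hle | hle
    · exact aux_lead φ Finset.univ Finset.univ _ _ (pos l hl) (pos m hm) ε δ hε _ _ hle h3
    · have := aux_lead φ Finset.univ Finset.univ _ _ (pos m hm) (pos l hl) δ ε hδ _ _ hle
        (fun n hn => (h3 n hn).symm)
      exact ⟨this.1.symm, this.2.symm⟩
  have h4 := aux_eq φ _ _ _ Finset.univ Finset.univ rfl (pos l hl) (pos m hm) (by
    intro n hn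
    have := h3 n hn
    rw [hL.1, hL.2] at this
    exact mul_left_cancel₀ (mul_ne_zero hδ (pow_ne_zero _ (Units.ne_zero _))) this)
  obtain ⟨σ, hσ⟩ := aux_perm _ _ h4
  refine ⟨σ, ?_⟩
  have h5 := hL.1
  rw [← Equiv.prod_comp σ (fun i => if φ (m i) < 1 then m i else 1), ← div_eq_one,
    ← Finset.prod_div_distrib] at h5
  have h6 : ∏ i ∈ Finset.univ.filter (fun i => ¬ (φ (l i) < 1 ↔ φ (m (σ i)) < 1)), l i = 1 := by
    rw [Finset.prod_filter]
    refine Eq.trans ?_ h5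
    apply Finset.prod_congr rfl
    intro i _
    have := hσ i
    by_cases hi : φ (l i) < 1 <;> by_cases hj : φ (m (σ i)) < 1 <;>
      simp only [hi, hj, if_true, if_false] at this ⊢
    · rw [inv_inj] at this; simp [this]
    · simp
    · simp [this]
    · simp
  have h7 := hgen _ h6
  intro i
  have h8 : (φ (l i) < 1 ↔ φ (m (σ i)) < 1) := by
    by_contra hc
    have : i ∈ Finset.univ.filter (fun i => ¬ (φ (l i) < 1 ↔ φ (m (σ i)) < 1)) := by simpa using hc
    rw [h7] at this
    simp at this
  have := hσ i
  by_cases hi : φ (l i) < 1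
  · have hj := h8.1 hi
    simpa [hi, hj] using this
  · have hj : ¬ φ (m (σ i)) < 1 := fun hh => hi (h8.2 hh)
    simpa [hi, hj] using this

theorem aux_nonzero {K : Type*} [Field K] (d : ℕ) (hd : 2 ≤ d) (l : Fin d → K)
    (hlprod : Function.Injective fun S : Finset (Fin d) => ∏ i ∈ S, l i) (i : Fin d) :
    l i ≠ 0 := by
  intro h0
  have : Nontrivial (Fin d) := Fin.nontrivial_iff_two_le.2 hd
  obtain ⟨j, hj⟩ := exists_ne i
  have : ({i} : Finset (Fin d)) = {i, j} := by
    apply hlprod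
    simp only [Finset.prod_singleton]
    rw [Finset.prod_pair hj.symm, h0, zero_mul]
  have hh : j ∈ ({i} : Finset (Fin d)) := by rw [this]; simp
  exact hj (by simpa using hh)

/-- A generic monic polynomial of degree `d ≥ 1` over an algebraically closed field of
characteristic zero is determined by its first `2^(d+1)` cyclic resultants.
Genericity: no root is a root of unity, and the `2^d` subset products of the roots
are pairwise distinct. -/
theorem generic_determined_by_first_two_pow_succ_cyclic_resultants
    {K : Type*} [Field K] [IsAlgClosed K] [CharZero K]
    (d : ℕ) (hd : 1 ≤ d) (f g : Polynomial K) (l m : Fin d → K)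
    (hf : f = ∏ i, (X - C (l i)))
    (hg : g = ∏ i, (X - C (m i)))
    (hlunit : ∀ i, ∀ n : ℕ, 0 < n → l i ^ n ≠ 1)
    (hmunit : ∀ i, ∀ n : ℕ, 0 < n → m i ^ n ≠ 1)
    (hlprod : Function.Injective fun S : Finset (Fin d) => ∏ i ∈ S, l i)
    (hmprod : Function.Injective fun S : Finset (Fin d) => ∏ i ∈ S, m i)
    (hres : ∀ n : ℕ, 1 ≤ n → n ≤ 2 ^ (d + 1) →
      ∏ i, (l i ^ n - 1) = ∏ i, (m i ^ n - 1)) :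
    f = g := by
  classical
  rcases Nat.lt_or_ge d 2 with hd2 | hd2
  · obtain rfl : d = 1 := by omega
    have h1 := hres 1 le_rfl (by norm_num)
    simp at h1
    rw [hf, hg]
    simp [h1]
  have hl0 := aux_nonzero d hd2 l hlprod
  have hm0 := aux_nonzero d hd2 m hmprod
  have hneg : ∀ (l : Fin d → K) (n : ℕ), ∏ i, (1 - l i ^ n) = (-1) ^ d * ∏ i, (l i ^ n - 1) := by
    intro l n
    have : ∀ i, 1 - l i ^ n = -(l i ^ n - 1) := fun i => by ring
    simp only [this]
    rw [Finset.prod_neg]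
    simp
  have hall : ∀ n : ℕ, 1 ≤ n → ∏ i, (1 - l i ^ n) = ∏ i, (1 - m i ^ n) := by
    intro n hn
    rw [aux_expand, aux_expand]
    refine aux_ext _ _ _ _ _ _ ?_ n hn
    intro k hk1 hk2
    rw [← aux_expand, ← aux_expand, hneg, hneg, hres k hk1 (by
      simp only [Finset.card_powerset, Finset.card_univ, Fintype.card_fin] at hk2
      rw [pow_succ]; omega)]
  let l' : Fin d → Kˣ := fun i => Units.mk0 (l i) (hl0 i)
  let m' : Fin d → Kˣ := fun i => Units.mk0 (m i) (hm0 i)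
  obtain ⟨φ, hφ⟩ := aux_phi (Finset.univ.image l' ∪ Finset.univ.image m') (by
    intro x hx n hn h1
    rcases Finset.mem_union.1 hx with hx | hx
    · obtain ⟨i, _, rfl⟩ := Finset.mem_image.1 hx
      exact hlunit i n hn (by simpa [l'] using congrArg Units.val h1)
    · obtain ⟨i, _, rfl⟩ := Finset.mem_image.1 hx
      exact hmunit i n hn (by simpa [m'] using congrArg Units.val h1))
  obtain ⟨σ, hσ⟩ := aux_units φ l' m' (fun i => hφ _ (by simp)) (fun i => hφ _ (by simp)) (by
    intro S hS
    apply hlprod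
    have := congrArg Units.val hS
    simpa [l', Units.coe_prod] using this) hall
  rw [hf, hg, ← Equiv.prod_comp σ (fun i => X - C (m i))]
  apply Finset.prod_congr rfl
  intro i _
  have : m (σ i) = l i := congrArg Units.val (hσ i)
  rw [this]
end

section
/- Let K be an algebraically closed field of characteristic zero and let f ∈ K[x] be a monic reciprocal polynomial of even degree d, with roots coming in reciprocal pairs λ_1^{±1}, …, λ_{d/2}^{±1}, that is generic, meaning no root of f is a root of unity and the 3^{d/2} quotients λ_S/λ_T, taken over all ordered pairs (S,T) of disjoint subsets of {1,…,d/2}, are pairwise distinct. If g is another such generic monic reciprocal polynomial of degree d with r_m(g) = r_m(f) for all 1 ≤ m ≤ 2·3^{d/2}, then g = f. -/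
open Polynomial

/-- The three monomials attached to an element. -/
def triW {K : Type*} [Field K] (x : K) (j : Fin 3) : K :=
  if j = 0 then 1 else if j = 1 then x else x⁻¹

/-- The three coefficients. -/
def triC (j : Fin 3) : ℤ := if j = 0 then 2 else -1

/-- The quotients, indexed by functions to `Fin 3`. -/
def triQ {K : Type*} [Field K] {e : ℕ} (l : Fin e → K) (s : Fin e → Fin 3) : K :=
  ∏ i, triW (l i) (s i)

/-- Their coefficients. -/
def triD {e : ℕ} (s : Fin e → Fin 3) : ℤ := ∏ i, triC (s i)

lemma triQ_ne {K : Type*} [Field K] {e : ℕ} (l : Fin e → K) (hl : ∀ i, l i ≠ 0)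
    (s : Fin e → Fin 3) : triQ l s ≠ 0 := by
  unfold triQ
  refine Finset.prod_ne_zero_iff.mpr fun i _ => ?_
  unfold triW
  split_ifs
  · exact one_ne_zero
  · exact hl i
  · exact inv_ne_zero (hl i)

lemma triD_ne {e : ℕ} (s : Fin e → Fin 3) : triD s ≠ 0 := by
  unfold triD
  refine Finset.prod_ne_zero_iff.mpr fun i _ => ?_
  unfold triC
  split_ifs <;> norm_num

lemma triQ_eq {K : Type*} [Field K] {e : ℕ} (l : Fin e → K) (s : Fin e → Fin 3) :
    triQ l s = (∏ i ∈ Finset.univ.filter (fun i => s i = 1), l i) /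
      ∏ i ∈ Finset.univ.filter (fun i => s i = 2), l i := by
  rw [Finset.prod_filter, Finset.prod_filter, ← Finset.prod_div_distrib]
  unfold triQ
  refine Finset.prod_congr rfl fun i _ => ?_
  generalize s i = j
  fin_cases j <;> simp [triW]

lemma triQ_inj {K : Type*} [Field K] {e : ℕ} (l : Fin e → K)
    (h : Set.InjOn
      (fun p : Finset (Fin e) × Finset (Fin e) => (∏ i ∈ p.1, l i) / ∏ i ∈ p.2, l i)
      {p | Disjoint p.1 p.2}) : Function.Injective (triQ l) := by
  intro s t hst
  have hd : ∀ s : Fin e → Fin 3, Disjoint (Finset.univ.filter (fun i => s i = 1))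
      (Finset.univ.filter (fun i => s i = 2)) := by
    intro s
    rw [Finset.disjoint_filter]
    intro i _ h1 h2
    rw [h1] at h2
    exact absurd h2 (by decide)
  rw [triQ_eq, triQ_eq] at hst
  have := h (x₁ := (Finset.univ.filter (fun i => s i = 1), Finset.univ.filter (fun i => s i = 2)))
    (x₂ := (Finset.univ.filter (fun i => t i = 1), Finset.univ.filter (fun i => t i = 2))) (hd s) (hd t) hst
  rw [Prod.mk.injEq] at this
  obtain ⟨h1, h2⟩ := this
  funext i
  have e1 := Finset.ext_iff.mp h1 i
  have e2 := Finset.ext_iff.mp h2 i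
  simp only [Finset.mem_filter, Finset.mem_univ, true_and] at e1 e2
  revert e1 e2
  generalize s i = a
  generalize t i = b
  revert a b
  decide

lemma tri_expand {K : Type*} [Field K] {e : ℕ} (l : Fin e → K) (hl : ∀ i, l i ≠ 0) (n : ℕ) :
    ∏ i, ((l i ^ n - 1) * ((l i)⁻¹ ^ n - 1)) = ∑ s, (triD s : K) * triQ l s ^ n := by
  have h1 : ∀ i, (l i ^ n - 1) * ((l i)⁻¹ ^ n - 1)
      = ∑ j : Fin 3, (triC j : K) * triW (l i) j ^ n := by
    intro i
    have : l i ^ n * (l i)⁻¹ ^ n = 1 := by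
      rw [← mul_pow, mul_inv_cancel₀ (hl i), one_pow]
    rw [Fin.sum_univ_three]
    have h2 : ((2 : Fin 3) = 0) = False := by decide
    have h3 : ((2 : Fin 3) = 1) = False := by decide
    have h4 : ((1 : Fin 3) = 0) = False := by decide
    simp only [triC, triW, h2, h3, h4, if_true, if_false, one_pow]
    push_cast
    linear_combination this
  simp_rw [h1]
  rw [Finset.prod_univ_sum, Fintype.piFinset_univ]
  refine Finset.sum_congr rfl fun s _ => ?_
  rw [Finset.prod_mul_distrib, Finset.prod_pow]
  simp [triD, triQ]

lemma tri_poly {K : Type*} [Field K] {e : ℕ} (l m : Fin e → K) (N : ℕ)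
    (h : ∀ n : ℕ, 1 ≤ n → n ≤ N →
      ∑ s, (triD s : K) * triQ l s ^ n = ∑ s, (triD s : K) * triQ m s ^ n)
    (p : K[X]) (hp : p.natDegree < N) :
    ∑ s, (triD s : K) * (triQ l s * p.eval (triQ l s))
      = ∑ s, (triD s : K) * (triQ m s * p.eval (triQ m s)) := by
  have key : ∀ l : Fin e → K, ∑ s, (triD s : K) * (triQ l s * p.eval (triQ l s))
      = ∑ k ∈ Finset.range (p.natDegree + 1),
        p.coeff k * ∑ s, (triD s : K) * triQ l s ^ (k + 1) := by
    intro l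
    simp_rw [Finset.mul_sum]
    rw [Finset.sum_comm]
    refine Finset.sum_congr rfl fun s _ => ?_
    rw [eval_eq_sum_range, Finset.mul_sum, Finset.mul_sum]
    refine Finset.sum_congr rfl fun k _ => ?_
    ring
  rw [key, key]
  refine Finset.sum_congr rfl fun k hk => ?_
  rw [Finset.mem_range] at hk
  rw [h (k + 1) (by omega) (by omega)]

lemma tri_match {K : Type*} [Field K] [CharZero K] {e : ℕ} (l m : Fin e → K)
    (hl0 : ∀ i, l i ≠ 0)
    (hli : Function.Injective (triQ l)) (hmi : Function.Injective (triQ m))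
    (h : ∀ n : ℕ, 1 ≤ n → n ≤ 2 * 3 ^ e →
      ∑ s, (triD s : K) * triQ l s ^ n = ∑ s, (triD s : K) * triQ m s ^ n)
    (s : Fin e → Fin 3) : ∃ t, triQ m t = triQ l s ∧ triD t = triD s := by
  classical
  set U : Finset K := Finset.univ.image (triQ l) ∪ Finset.univ.image (triQ m) with hU
  have hUc : U.card ≤ 2 * 3 ^ e := by
    refine (Finset.card_union_le _ _).trans ?_
    have h1 : (Finset.univ.image (triQ l)).card ≤ 3 ^ e :=
      Finset.card_image_le.trans (by simp)
    have h2 : (Finset.univ.image (triQ m)).card ≤ 3 ^ e :=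
      Finset.card_image_le.trans (by simp)
    omega
  have hsU : triQ l s ∈ U := by simp [hU]
  set p : K[X] := ∏ v ∈ U.erase (triQ l s), (X - C v) with hp
  have hpd : p.natDegree < 2 * 3 ^ e := by
    rw [hp, natDegree_finsetProd_X_sub_C_eq_card, Finset.card_erase_of_mem hsU]
    have := Finset.card_pos.mpr ⟨_, hsU⟩
    omega
  have hp0 : ∀ v ∈ U, v ≠ triQ l s → p.eval v = 0 := by
    intro v hv hne
    rw [hp, eval_prod]
    exact Finset.prod_eq_zero (Finset.mem_erase.mpr ⟨hne, hv⟩) (by simp)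
  have hp1 : p.eval (triQ l s) ≠ 0 := by
    rw [hp, eval_prod]
    refine Finset.prod_ne_zero_iff.mpr fun v hv => ?_
    simp only [eval_sub, eval_X, eval_C]
    exact sub_ne_zero.mpr (Finset.ne_of_mem_erase hv).symm
  have heq := tri_poly l m _ h p hpd
  rw [Finset.sum_eq_single s (fun t _ hts => by
    rw [hp0 _ (by simp [hU]) (fun hh => hts (hli hh))]; simp) (by simp)] at heq
  have hq := triQ_ne l hl0 s
  have hd : (triD s : K) ≠ 0 := Int.cast_ne_zero.mpr (triD_ne s)
  by_cases hex : ∃ t, triQ m t = triQ l s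
  · obtain ⟨t, ht⟩ := hex
    refine ⟨t, ht, ?_⟩
    rw [Finset.sum_eq_single t (fun t' _ hts => by
      rw [hp0 _ (by simp [hU]) (fun hh => hts (hmi (hh.trans ht.symm)))]; simp) (by simp),
      ht] at heq
    exact (Int.cast_injective (mul_right_cancel₀ (mul_ne_zero hq hp1) heq)).symm
  · exfalso
    push Not at hex
    rw [Finset.sum_eq_zero (fun t _ => by
      rw [hp0 _ (by simp [hU]) (hex t)]; simp)] at heq
    exact mul_ne_zero hd (mul_ne_zero hq hp1) heq

/-- The index with one nontrivial entry. -/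
def triS {e : ℕ} (i : Fin e) (j : Fin 3) : Fin e → Fin 3 := fun k => if k = i then j else 0

lemma triQ_triS {K : Type*} [Field K] {e : ℕ} (l : Fin e → K) (i : Fin e) (j : Fin 3) :
    triQ l (triS i j) = triW (l i) j := by
  unfold triQ
  rw [Finset.prod_eq_single i]
  · simp [triS]
  · intro k _ hk
    simp [triS, hk, triW]
  · simp

lemma triD_natAbs {e : ℕ} (s : Fin e → Fin 3) :
    (triD s).natAbs = 2 ^ (Finset.univ.filter (fun i => s i = 0)).card := by
  unfold triD
  rw [← Int.natAbsHom_apply, map_prod, Finset.card_filter, ← Finset.prod_pow_eq_pow_sum]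
  refine Finset.prod_congr rfl fun i _ => ?_
  unfold triC
  split_ifs <;> simp

lemma tri_single {e : ℕ} (i : Fin e) (t : Fin e → Fin 3) (h : triD t = triD (triS i 1)) :
    ∃ i' j, j ≠ 0 ∧ t = triS i' j := by
  have h2 := congrArg Int.natAbs h
  rw [triD_natAbs, triD_natAbs] at h2
  have h3 := Nat.pow_right_injective (le_refl 2) h2
  have c1 := Finset.card_filter_add_card_filter_not (s := Finset.univ) (fun k => t k = 0)
  have c2 := Finset.card_filter_add_card_filter_not (s := Finset.univ) (fun k => triS i 1 k = 0)
  have c3 : (Finset.univ.filter (fun k => ¬ triS i 1 k = 0)) = {i} := by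
    ext k
    simp [triS]
  rw [c3, Finset.card_singleton] at c2
  have c4 : (Finset.univ.filter (fun k => ¬ t k = 0)).card = 1 := by omega
  obtain ⟨i', hi'⟩ := Finset.card_eq_one.mp c4
  have hk : ∀ k, t k ≠ 0 ↔ k = i' := by
    intro k
    have := Finset.ext_iff.mp hi' k
    simpa using this
  refine ⟨i', t i', (hk i').mpr rfl, ?_⟩
  funext k
  unfold triS
  split_ifs with hh
  · rw [hh]
  · by_contra hne
    exact hh ((hk k).mp hne)


/-- A generic monic reciprocal polynomial of even degree `d = 2e` over an algebraically
closed field of characteristic zero, with roots `l i` and `(l i)⁻¹`, is determined by its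
first `2·3^(d/2)` cyclic resultants.  Genericity: no root is a root of unity, and the
`3^(d/2)` quotients `λ_S / λ_T` over ordered pairs of disjoint subsets `S, T ⊆ {1,…,d/2}`
are pairwise distinct. -/
theorem generic_reciprocal_determined_by_first_cyclic_resultants
    {K : Type*} [Field K] [IsAlgClosed K] [CharZero K]
    (e : ℕ) (f g : Polynomial K) (l m : Fin e → K)
    (hl0 : ∀ i, l i ≠ 0) (hm0 : ∀ i, m i ≠ 0)
    (hf : f = ∏ i, ((X - C (l i)) * (X - C (l i)⁻¹)))
    (hg : g = ∏ i, ((X - C (m i)) * (X - C (m i)⁻¹)))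
    (hlunit : ∀ i, ∀ n : ℕ, 0 < n → l i ^ n ≠ 1)
    (hmunit : ∀ i, ∀ n : ℕ, 0 < n → m i ^ n ≠ 1)
    (hlquot : Set.InjOn
      (fun p : Finset (Fin e) × Finset (Fin e) => (∏ i ∈ p.1, l i) / ∏ i ∈ p.2, l i)
      {p | Disjoint p.1 p.2})
    (hmquot : Set.InjOn
      (fun p : Finset (Fin e) × Finset (Fin e) => (∏ i ∈ p.1, m i) / ∏ i ∈ p.2, m i)
      {p | Disjoint p.1 p.2})
    (hres : ∀ n : ℕ, 1 ≤ n → n ≤ 2 * 3 ^ e →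
      ∏ i, ((l i ^ n - 1) * ((l i)⁻¹ ^ n - 1)) =
        ∏ i, ((m i ^ n - 1) * ((m i)⁻¹ ^ n - 1))) :
    f = g := by

  have hli := triQ_inj l hlquot
  have hmi := triQ_inj m hmquot
  have h : ∀ n : ℕ, 1 ≤ n → n ≤ 2 * 3 ^ e →
      ∑ s, (triD s : K) * triQ l s ^ n = ∑ s, (triD s : K) * triQ m s ^ n := by
    intro n h1 h2
    rw [← tri_expand l hl0, ← tri_expand m hm0]
    exact hres n h1 h2
  have hex : ∀ i, ∃ i', l i = m i' ∨ l i = (m i')⁻¹ := by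
    intro i
    obtain ⟨t, ht, hd⟩ := tri_match l m hl0 hli hmi h (triS i 1)
    obtain ⟨i', j, hj, rfl⟩ := tri_single i t hd
    refine ⟨i', ?_⟩
    rw [triQ_triS, triQ_triS] at ht
    simp only [triW, hj, if_false] at ht
    norm_num at ht
    split_ifs at ht
    · exact Or.inl ht.symm
    · exact Or.inr ht.symm
  choose φ hφ using hex
  have hinj : Function.Injective φ := by
    intro a b hab
    have ha := hφ a
    have hb := hφ b
    rw [hab] at ha
    have hor : l a = l b ∨ l a = (l b)⁻¹ := by
      rcases ha with ha | ha <;> rcases hb with hb | hb <;> simp [ha, hb]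
    have hor2 : ∃ j, triQ l (triS a 1) = triQ l (triS b j) := by
      rcases hor with hh | hh
      · exact ⟨1, by simp [triQ_triS, triW, hh]⟩
      · exact ⟨2, by simp [triQ_triS, triW, hh]⟩
    obtain ⟨j, hj⟩ := hor2
    have := congrFun (hli hj) a
    by_contra hne
    simp [triS, hne] at this
  rw [hf, hg]
  refine Fintype.prod_bijective φ (Finite.injective_iff_bijective.mp hinj) _ _ fun i => ?_
  rcases hφ i with hh | hh
  · rw [hh]
  · rw [hh, inv_inv, mul_comm]
end

section
/- Let K be an algebraically closed field of characteristic zero and let f, g ∈ K[x] be monic polynomials of degree d ≥ 1, each generic in the sense that none of its roots is a root of unity and its 2^d subset products of roots are pairwise distinct. If the cyclic resultants satisfy r_m(f) = r_m(g) for all 1 ≤ m ≤ 2^{d+1}, then r_m(f) = r_m(g) for all m ≥ 1; that is, the first 2^{d+1} cyclic resultants of a generic monic degree-d polynomial determine its full sequence of cyclic resultants. -/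
open Polynomial

theorem exp_sum_zero {K ι : Type*} [Field K] [Fintype ι] (c a : ι → K)
    (h : ∀ n : ℕ, 1 ≤ n → n ≤ Fintype.card ι → ∑ i, c i * a i ^ n = 0) :
    ∀ n : ℕ, 1 ≤ n → ∑ i, c i * a i ^ n = 0 := by
  intro n
  induction n using Nat.strong_induction_on with
  | _ n ih =>
    intro hn
    by_cases hN : n ≤ Fintype.card ι
    · exact h n hn hN
    push Not at hN
    set P : Polynomial K := ∏ i, (X - C (a i)) with hP
    have hmon : P.Monic := monic_prod_of_monic _ _ fun i _ => monic_X_sub_C _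
    have hdeg : P.natDegree = Fintype.card ι := by
      rw [hP, natDegree_prod_of_monic _ _ fun i _ => monic_X_sub_C _]
      simp
    have hroot : ∀ i, P.eval (a i) = 0 := by
      intro i
      rw [hP, eval_prod]
      exact Finset.prod_eq_zero (Finset.mem_univ i) (by simp)
    obtain ⟨k, hk, rfl⟩ : ∃ k, 1 ≤ k ∧ n = k + Fintype.card ι :=
      ⟨n - Fintype.card ι, by omega, by omega⟩
    have key : ∀ i, a i ^ (k + Fintype.card ι)
        = - ∑ j ∈ Finset.range (Fintype.card ι), P.coeff j * a i ^ (k + j) := by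
      intro i
      have h1 := hroot i
      rw [eval_eq_sum_range, Finset.sum_range_succ, hmon.coeff_natDegree, hdeg] at h1
      have h2 : a i ^ Fintype.card ι
          = - ∑ j ∈ Finset.range (Fintype.card ι), P.coeff j * a i ^ j := by
        linear_combination h1
      rw [pow_add, h2, mul_neg, Finset.mul_sum]
      congr 1
      refine Finset.sum_congr rfl fun j _ => ?_
      ring
    calc ∑ i, c i * a i ^ (k + Fintype.card ι)
        = - ∑ j ∈ Finset.range (Fintype.card ι), P.coeff j * ∑ i, c i * a i ^ (k + j) := by
          simp only [key, mul_neg, Finset.sum_neg_distrib, Finset.mul_sum]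
          rw [Finset.sum_comm]
          congr 1
          refine Finset.sum_congr rfl fun j _ => Finset.sum_congr rfl fun i _ => ?_
          ring
      _ = 0 := by
          rw [neg_eq_zero]
          refine Finset.sum_eq_zero fun j hj => ?_
          rw [Finset.mem_range] at hj
          rw [ih (k + j) (by omega) (by omega), mul_zero]

theorem cyc_expand {K : Type*} [Field K] (d : ℕ) (l : Fin d → K) (n : ℕ) :
    ∏ i, (l i ^ n - 1)
      = ∑ S : Finset (Fin d), (-1 : K) ^ (Finset.univ \ S).card * (∏ i ∈ S, l i) ^ n := by
  simp only [sub_eq_add_neg]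
  rw [Finset.prod_add]
  simp only [Finset.powerset_univ, Finset.prod_const, Finset.prod_pow]
  exact Finset.sum_congr rfl fun _ _ => mul_comm _ _


/-- For generic monic polynomials `f`, `g` of degree `d ≥ 1` over an algebraically closed
field of characteristic zero, if the first `2^(d+1)` cyclic resultants agree, then all
cyclic resultants agree. -/
theorem first_cyclic_resultants_determine_all
    {K : Type*} [Field K] [IsAlgClosed K] [CharZero K]
    (d : ℕ) (hd : 1 ≤ d) (f g : Polynomial K) (l m : Fin d → K)
    (hf : f = ∏ i, (X - C (l i)))
    (hg : g = ∏ i, (X - C (m i)))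
    (hlunit : ∀ i, ∀ n : ℕ, 0 < n → l i ^ n ≠ 1)
    (hmunit : ∀ i, ∀ n : ℕ, 0 < n → m i ^ n ≠ 1)
    (hlprod : Function.Injective fun S : Finset (Fin d) => ∏ i ∈ S, l i)
    (hmprod : Function.Injective fun S : Finset (Fin d) => ∏ i ∈ S, m i)
    (hres : ∀ n : ℕ, 1 ≤ n → n ≤ 2 ^ (d + 1) →
      ∏ i, (l i ^ n - 1) = ∏ i, (m i ^ n - 1)) :
    ∀ n : ℕ, 1 ≤ n → ∏ i, (l i ^ n - 1) = ∏ i, (m i ^ n - 1) := by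
  have e : ∀ n : ℕ, ∏ i, (l i ^ n - 1) - ∏ i, (m i ^ n - 1)
      = ∑ s : Finset (Fin d) ⊕ Finset (Fin d),
        (Sum.elim (fun S => (-1 : K) ^ (Finset.univ \ S).card)
          (fun S => -(-1 : K) ^ (Finset.univ \ S).card) s)
        * (Sum.elim (fun S => ∏ i ∈ S, l i) (fun S => ∏ i ∈ S, m i) s) ^ n := by
    intro n
    rw [cyc_expand, cyc_expand, Fintype.sum_sum_type]
    simp only [Sum.elim_inl, Sum.elim_inr, neg_mul, Finset.sum_neg_distrib, sub_eq_add_neg]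
  intro n hn
  rw [← sub_eq_zero, e]
  refine exp_sum_zero _ _ (fun k hk hk' => ?_) n hn
  rw [← e, sub_eq_zero]
  refine hres k hk (hk'.trans (le_of_eq ?_))
  simp [pow_succ, mul_two]
end

section
/- Let K be an algebraically closed field of characteristic zero and let f ∈ K[x] be a monic polynomial of degree d. Then the sequence {r_n(f)}_{n≥1} of cyclic resultants of f obeys a polynomial recurrence of length d + 1; that is, there exists a nonzero polynomial P ∈ K[x_1, …, x_{d+1}] such that P(r_n, r_{n+1}, …, r_{n+d}) = 0 for all n ≥ 1. -/
open Polynomial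

/-- The cyclic resultants `r n = ∏ (λ^n - 1)` (product over the roots, with multiplicity,
of a monic polynomial `f` of degree `d` over an algebraically closed field of
characteristic zero) satisfy a polynomial recurrence of length `d + 1`. -/
theorem cyclic_resultants_polynomial_recurrence
    {K : Type*} [Field K] [IsAlgClosed K] [CharZero K]
    (d : ℕ) (f : Polynomial K) (hf : f.Monic) (hdeg : f.natDegree = d)
    (r : ℕ → K) (hr : ∀ m : ℕ, 1 ≤ m → r m = (f.roots.map fun l => l ^ m - 1).prod) :
    ∃ P : MvPolynomial (Fin (d + 1)) K, P ≠ 0 ∧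
      ∀ n : ℕ, 1 ≤ n → MvPolynomial.eval (fun i : Fin (d + 1) => r (n + i)) P = 0 := by
  have hcard : f.roots.toList.length = d := by
    rw [Multiset.length_toList, ← hdeg]
    exact (IsAlgClosed.splits f).natDegree_eq_card_roots.symm
  obtain ⟨v, hv⟩ : ∃ v : Fin d → K, f.roots = (List.ofFn v : Multiset K) := by
    subst hcard
    refine ⟨f.roots.toList.get, ?_⟩
    rw [List.ofFn_get, Multiset.coe_toList]
  let Q : Fin (d + 1) → MvPolynomial (Fin d) K := fun i =>
    ∏ j, (MvPolynomial.C (v j ^ (i : ℕ)) * MvPolynomial.X j - 1)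
  have hQ : ¬ AlgebraicIndependent K Q := by
    intro h
    have h1 := h.lift_cardinalMk_le_trdeg
    rw [MvPolynomial.trdeg_of_isDomain] at h1
    simp at h1
  rw [algebraicIndependent_iff] at hQ
  push Not at hQ
  obtain ⟨P, hP, hP0⟩ := hQ
  refine ⟨P, hP0, fun n hn => ?_⟩
  have h2 := congrArg (MvPolynomial.aeval (fun j => v j ^ n)) hP
  rw [map_zero, MvPolynomial.comp_aeval_apply] at h2
  rw [← h2, MvPolynomial.aeval_eq_eval]
  have h3 : (fun i : Fin (d + 1) => r (n + i)) =
      fun i => (MvPolynomial.aeval (fun j => v j ^ n)) (Q i) := by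
    funext i
    rw [hr _ (by omega), hv]
    simp [Q, List.prod_ofFn, List.map_ofFn, pow_add, mul_comm]
  rw [h3]
end

section
/- Let K be an algebraically closed field of characteristic zero and let f ∈ K[x] be a monic reciprocal polynomial of even degree d. Then the sequence {r_n(f)}_{n≥1} of cyclic resultants of f obeys a polynomial recurrence of length d/2 + 1; that is, there exists a nonzero polynomial P ∈ K[x_1, …, x_{d/2+1}] such that P(r_n, r_{n+1}, …, r_{n+d/2}) = 0 for all n ≥ 1. -/
open Polynomial

theorem pairing_aux {K : Type*} [Field K] [CharZero K] (n : ℕ) :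
    ∀ M : Multiset K, M.card = 2 * n → (1 : K) ∉ M → (0 : K) ∉ M →
      M.map (fun a => a⁻¹) = M → ∃ N : Multiset K, M = N + N.map (fun a => a⁻¹) := by
  classical
  induction n with
  | zero =>
    intro M hc _ _ _
    refine ⟨0, ?_⟩
    simpa using hc
  | succ n ih =>
    intro M hc h1 h0 hinv
    by_cases hall : ∀ a ∈ M, a = -1
    · have hM := Multiset.eq_replicate_card.2 hall
      refine ⟨Multiset.replicate (n+1) (-1), ?_⟩
      rw [hM, hc, Multiset.map_replicate, inv_neg, inv_one, ← Multiset.replicate_add]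
      congr 1
      ring
    · push Not at hall
      obtain ⟨a, ha, hne⟩ := hall
      have ha0 : a ≠ 0 := fun h => h0 (h ▸ ha)
      have ha1 : a ≠ 1 := fun h => h1 (h ▸ ha)
      have hai : a⁻¹ ∈ M := by
        rw [← hinv]
        exact Multiset.mem_map_of_mem _ ha
      have hneq : a⁻¹ ≠ a := by
        intro h
        have h2 : a * a = 1 := by
          nth_rewrite 1 [← h]
          exact inv_mul_cancel₀ ha0
        rcases mul_self_eq_one_iff.1 h2 with h | h
        · exact ha1 h
        · exact hne h
      obtain ⟨M1, rfl⟩ := Multiset.exists_cons_of_mem ha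
      have hai1 : a⁻¹ ∈ M1 := by
        rcases Multiset.mem_cons.1 hai with h | h
        · exact absurd h hneq
        · exact h
      obtain ⟨M2, rfl⟩ := Multiset.exists_cons_of_mem hai1
      obtain ⟨N, hN⟩ := ih M2 (by simp at hc; omega)
        (fun h => h1 (by simp [h])) (fun h => h0 (by simp [h])) (by
          simp only [Multiset.map_cons, inv_inv] at hinv
          rw [Multiset.cons_swap] at hinv
          simpa using hinv)
      refine ⟨a ::ₘ N, ?_⟩
      conv_lhs => rw [hN]
      simp [Multiset.add_cons, Multiset.cons_add]
      rw [Multiset.cons_swap]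

theorem reverse_multiset_prod {K : Type*} [Field K] (M : Multiset K) :
    ((M.map (fun a => X - C a)).prod).reverse = (M.map (fun a => (X - C a).reverse)).prod := by
  induction M using Multiset.induction_on with
  | empty => simpa using reverse_C (1 : K)
  | cons a M ih => simp [reverse_mul_of_domain, ih]

theorem reverse_X_sub {K : Type*} [Field K] (a : K) (ha : a ≠ 0) :
    (X - C a : K[X]).reverse = C (-a) * (X - C a⁻¹) := by
  have h : (X - C a : K[X]).reverse = 1 + C (-a) * X := by
    have := reverse_add_C (R := K) X (-a)
    rw [natDegree_X, pow_one] at this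
    have h1 : (X : K[X]).reverse = 1 := by
      have h2 := reverse_mul_X (1 : K[X])
      rw [one_mul] at h2
      rw [h2]
      simpa using reverse_C (1 : K)
    rw [sub_eq_add_neg, ← C_neg, this, h1]
  rw [h, mul_sub, ← C_mul, neg_mul, mul_inv_cancel₀ ha]
  simp
  ring

theorem roots_inv {K : Type*} [Field K] [IsAlgClosed K] (f : K[X]) (hf : f.Monic)
    (hrecip : f.reverse = f) (h0 : (0 : K) ∉ f.roots) :
    f.roots.map (fun a => a⁻¹) = f.roots := by
  have hs : f = (f.roots.map (fun a => X - C a)).prod :=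
    ((IsAlgClosed.splits f).eq_prod_roots_of_monic hf)
  have h1 : f.reverse = (f.roots.map (fun a => (C (-a)) * (X - C a⁻¹))).prod := by
    conv_lhs => rw [hs, reverse_multiset_prod]
    congr 1
    apply Multiset.map_congr rfl
    intro a ha
    exact reverse_X_sub a (fun h => h0 (h ▸ ha))
  rw [Multiset.prod_map_mul] at h1
  have h2 : (f.roots.map (fun a => C (-a))).prod = C ((f.roots.map (fun a => -a)).prod) := by
    rw [map_multiset_prod C, Multiset.map_map]
    rfl
  have h3 : (f.roots.map (fun a => -a)).prod ≠ 0 := by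
    rw [Ne, Multiset.prod_eq_zero_iff]
    simpa using h0
  rw [h2, hrecip] at h1
  have h4 : (f.roots.map (fun a => X - C a⁻¹)) =
      ((f.roots.map (fun a => a⁻¹)).map (fun a => X - C a)) := by
    rw [Multiset.map_map]; rfl
  rw [h4] at h1
  conv_rhs => rw [h1, roots_C_mul _ h3, roots_multiset_prod_X_sub_C]

theorem rec_main {K : Type*} [Field K] (k : ℕ) (μ : Fin k → K) (hμ : ∀ j, μ j ≠ 0) :
    ∃ P : MvPolynomial (Fin (k + 1)) K, P ≠ 0 ∧ ∀ n : ℕ,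
      MvPolynomial.eval (fun i : Fin (k + 1) =>
        ∏ j, ((μ j ^ (n + (i : ℕ)) - 1) * ((μ j)⁻¹ ^ (n + (i : ℕ)) - 1))) P = 0 := by
  classical
  let A := MvPolynomial (Fin k) K
  let s : A := ∏ j, MvPolynomial.X j
  have hs : s ≠ 0 := Finset.prod_ne_zero_iff.2 fun j _ => MvPolynomial.X_ne_zero j
  have hle : Submonoid.powers s ≤ nonZeroDivisors A :=
    powers_le_nonZeroDivisors_of_noZeroDivisors hs
  let L := Localization.Away s
  have : IsDomain L := IsLocalization.isDomain_localization hle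
  have hinj : Function.Injective (algebraMap A L) := IsLocalization.injective L hle
  have : FaithfulSMul A L := (faithfulSMul_iff_algebraMap_injective A L).2 hinj
  have htr : Algebra.trdeg K L = k := by
    have h := trdeg_add_eq K A (A := L)
    have : Algebra.IsAlgebraic A L := IsLocalization.isAlgebraic L (Submonoid.powers s)
    rw [trdeg_eq_zero (R := A) (A := L), add_zero] at h
    rw [← h, MvPolynomial.trdeg_of_isDomain]
    simp
  have hunit : ∀ j, ∃ y : L, algebraMap A L (MvPolynomial.X j) * y = 1 := by
    intro j
    have h1 : IsUnit (algebraMap A L s) := IsLocalization.Away.algebraMap_isUnit s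
    have h2 : IsUnit (algebraMap A L (MvPolynomial.X j)) :=
      isUnit_of_dvd_unit (map_dvd _ (Finset.dvd_prod_of_mem _ (Finset.mem_univ j))) h1
    exact h2.exists_right_inv
  choose y hy using hunit
  let a : Fin (k + 1) → L := fun i => ∏ j,
    ((algebraMap K L (μ j ^ (i : ℕ)) * algebraMap A L (MvPolynomial.X j) - 1) *
      (algebraMap K L ((μ j)⁻¹ ^ (i : ℕ)) * y j - 1))
  have hdep : ¬ AlgebraicIndependent K a := by
    intro h
    have := h.lift_cardinalMk_le_trdeg
    rw [htr] at this
    simp at this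
  rw [algebraicIndependent_iff] at hdep
  push Not at hdep
  obtain ⟨P, hP, hP0⟩ := hdep
  refine ⟨P, hP0, fun n => ?_⟩
  have hu : IsUnit ((MvPolynomial.aeval (R := K) (fun j => μ j ^ n) : A →ₐ[K] K) s) := by
    simp only [s, map_prod, MvPolynomial.aeval_X]
    exact (Finset.prod_ne_zero_iff.2 fun j _ => pow_ne_zero _ (hμ j)).isUnit
  let φ : L →ₐ[K] K := IsLocalization.Away.liftAlgHom s hu
  have hφX : ∀ j, φ (algebraMap A L (MvPolynomial.X j)) = μ j ^ n := by
    intro j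
    have := IsLocalization.Away.lift_eq (S := L) s hu (MvPolynomial.X j)
    exact this.trans (MvPolynomial.aeval_X _ _)
  have hφy : ∀ j, φ (y j) = (μ j)⁻¹ ^ n := by
    intro j
    have := congrArg φ (hy j)
    rw [map_mul, hφX, map_one] at this
    rw [inv_pow]
    exact eq_inv_of_mul_eq_one_right this
  have hφa : ∀ i, φ (a i) =
      ∏ j, ((μ j ^ (n + (i : ℕ)) - 1) * ((μ j)⁻¹ ^ (n + (i : ℕ)) - 1)) := by
    intro i
    simp only [a, map_prod, map_mul, map_sub, map_one, hφX, hφy, AlgHom.commutes,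
      Algebra.algebraMap_self, RingHom.id_apply]
    refine Finset.prod_congr rfl fun j _ => ?_
    ring
  have h := congrArg φ hP
  rw [map_zero, MvPolynomial.comp_aeval_apply] at h
  change MvPolynomial.eval (fun i => φ (a i)) P = 0 at h
  simpa only [hφa] using h

/-- The cyclic resultants of a monic reciprocal polynomial of even degree `d` over an
algebraically closed field of characteristic zero satisfy a polynomial recurrence of
length `d/2 + 1`.  Reciprocal means `x^d f(1/x) = f(x)`, i.e. `f.reverse = f`. -/
theorem cyclic_resultants_polynomial_recurrence_reciprocal
    {K : Type*} [Field K] [IsAlgClosed K] [CharZero K]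
    (d : ℕ) (hd : Even d) (f : Polynomial K) (hf : f.Monic) (hdeg : f.natDegree = d)
    (hrecip : f.reverse = f)
    (r : ℕ → K) (hr : ∀ m : ℕ, 1 ≤ m → r m = (f.roots.map fun l => l ^ m - 1).prod) :
    ∃ P : MvPolynomial (Fin (d / 2 + 1)) K, P ≠ 0 ∧
      ∀ n : ℕ, 1 ≤ n → MvPolynomial.eval (fun i : Fin (d / 2 + 1) => r (n + i)) P = 0 := by
  by_cases h1 : (1 : K) ∈ f.roots
  · refine ⟨MvPolynomial.X 0, MvPolynomial.X_ne_zero 0, fun n hn => ?_⟩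
    rw [MvPolynomial.eval_X, hr _ (by omega), Multiset.prod_eq_zero_iff]
    exact Multiset.mem_map.2 ⟨1, h1, by simp⟩
  have h0 : (0 : K) ∉ f.roots := by
    intro h
    have h2 := (mem_roots'.1 h).2
    rw [IsRoot.def, ← coeff_zero_eq_eval_zero, ← hrecip, coeff_zero_reverse,
      hf.leadingCoeff] at h2
    exact one_ne_zero h2
  have hcard : f.roots.card = d := by
    rw [← hdeg]; exact (IsAlgClosed.splits f).natDegree_eq_card_roots.symm
  obtain ⟨N, hN⟩ := pairing_aux (d / 2) f.roots
    (by rw [hcard]; have := Nat.even_iff.1 hd; omega) h1 h0 (roots_inv f hf hrecip h0)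
  induction N using Quot.inductionOn with
  | _ l =>
  change f.roots = (l : Multiset K) + (l : Multiset K).map (fun a => a⁻¹) at hN
  have hl : d / 2 = l.length := by
    rw [hN] at hcard
    simp at hcard
    omega
  rw [hl]
  obtain ⟨P, hP0, hP⟩ := rec_main l.length (fun j => l[j]) (fun j h => h0 (by
    rw [hN, ← h]
    exact Multiset.mem_add.2 (Or.inl (by simp))))
  refine ⟨P, hP0, fun n hn => ?_⟩
  rw [← hP n]
  congr 2
  funext i
  rw [hr _ (by omega), hN, Multiset.map_add, Multiset.prod_add, Multiset.map_map,
    ← Multiset.prod_map_mul, Multiset.map_coe, Multiset.prod_coe]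
  exact (Fin.prod_univ_fun_getElem l
    (fun a => (a ^ (n + (i : ℕ)) - 1) * (a⁻¹ ^ (n + (i : ℕ)) - 1))).symm
end

section
/- Let K be an algebraically closed field of characteristic zero, let p_1, …, p_t ∈ K[x] be nonzero polynomials and μ_1, …, μ_t distinct nonzero elements of K, and define a_n = ∑_{i=1}^t p_i(n) μ_i^n for n ≥ 1. Let A ⊆ K^* be the multiplicative subgroup generated by μ_1, …, μ_t and let r be the rank of A (the torsion-free rank of the finitely generated abelian group A, i.e. dim_ℚ(ℚ ⊗_ℤ A)). Then the sequence {a_n}_{n≥1} obeys a polynomial recurrence of length r + 2. -/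
open scoped TensorProduct

theorem aux_dep {K R ι : Type*} [Field K] [CommRing R] [Algebra K R] [Fintype ι]
    (W : ℕ → Submodule K R) (h1 : 1 ∈ W 0)
    (hmul : ∀ M N x y, x ∈ W M → y ∈ W N → x * y ∈ W (M + N)) (hmono : Monotone W)
    (f : ι → R) (hf : ∀ i, f i ∈ W 1) (D : ℕ)
    [FiniteDimensional K (W (Fintype.card ι * D))]
    (hD : Module.finrank K (W (Fintype.card ι * D)) < D ^ Fintype.card ι) :
    ∃ P : MvPolynomial ι K, P ≠ 0 ∧ MvPolynomial.aeval f P = 0 := by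
  classical
  have hpow : ∀ i k, f i ^ k ∈ W k := by
    intro i k
    induction k with
    | zero => simpa using h1
    | succ k ih => rw [pow_succ]; exact hmul _ _ _ _ ih (hf i)
  have hprod : ∀ (k : ι → ℕ) (s : Finset ι), ∏ i ∈ s, f i ^ k i ∈ W (∑ i ∈ s, k i) := by
    intro k s
    induction s using Finset.induction_on with
    | empty => simpa using h1
    | insert i s hi ih =>
      rw [Finset.prod_insert hi, Finset.sum_insert hi]
      exact hmul _ _ _ _ (hpow i _) ih
  have hmem : ∀ k : ι → Fin D, ∏ i, f i ^ (k i : ℕ) ∈ W (Fintype.card ι * D) := by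
    intro k
    refine hmono ?_ (hprod (fun i => (k i : ℕ)) Finset.univ)
    calc ∑ i, (k i : ℕ) ≤ ∑ _i : ι, D := Finset.sum_le_sum fun i _ => (k i).2.le
      _ = _ := by simp
  let F : (ι → Fin D) → W (Fintype.card ι * D) := fun k => ⟨_, hmem k⟩
  have hnot : ¬ LinearIndependent K F := by
    intro h
    have := h.fintype_card_le_finrank
    simp only [Fintype.card_pi, Fintype.card_fin, Finset.prod_const, Finset.card_univ] at this
    omega
  rw [Fintype.not_linearIndependent_iff] at hnot
  obtain ⟨c, hc, k₀, hk₀⟩ := hnot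
  let ex : (ι → Fin D) → (ι →₀ ℕ) := fun k => Finsupp.equivFunOnFinite.symm (fun i => (k i : ℕ))
  have hex : Function.Injective ex := by
    intro k l h
    funext i
    have := DFunLike.congr_fun h i
    exact Fin.ext (by simpa [ex] using this)
  refine ⟨∑ k, MvPolynomial.monomial (ex k) (c k), ?_, ?_⟩
  · intro h
    apply hk₀
    have := congrArg (MvPolynomial.coeff (ex k₀)) h
    simpa [MvPolynomial.coeff_sum, MvPolynomial.coeff_monomial, hex.eq_iff] using this
  · have := congrArg Subtype.val hc
    simp only [AddSubmonoidClass.coe_finsetSum, Submodule.coe_smul, ZeroMemClass.coe_zero, F] at this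
    rw [map_sum, ← this]
    refine Finset.sum_congr rfl fun k _ => ?_
    rw [MvPolynomial.aeval_monomial, Algebra.smul_def, Finsupp.prod_fintype _ _ (by simp)]
    simp [ex]

theorem aux_main {K T : Type*} [Field K] [AddCommGroup T] [Finite T] (r t : ℕ)
    (χ : (Fin r → ℤ) × T → Kˣ) (hχ0 : χ 0 = 1) (hχ : ∀ x y, χ (x + y) = χ x * χ y)
    (p : Fin t → Polynomial K) (v : Fin t → (Fin r → ℤ) × T)
    (a : ℕ → K) (ha : ∀ n : ℕ, 1 ≤ n → a n = ∑ i, (p i).eval (n : K) * (χ (v i) : K) ^ n) :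
    ∃ P : MvPolynomial (Fin (r + 2)) K, P ≠ 0 ∧
      ∀ n : ℕ, 1 ≤ n → MvPolynomial.eval (fun i : Fin (r + 2) => a (n + i)) P = 0 := by
  classical
  have := Fintype.ofFinite T
  obtain ⟨d, hd⟩ : ∃ d : ℕ, ∀ i, (p i).natDegree ≤ d :=
    ⟨∑ i, (p i).natDegree, fun i => Finset.single_le_sum (f := fun i => (p i).natDegree)
      (fun _ _ => Nat.zero_le _) (Finset.mem_univ i)⟩
  obtain ⟨C, hC⟩ : ∃ C : ℕ, ∀ i k, |(v i).1 k| ≤ C := by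
    refine ⟨∑ i, ∑ k, ((v i).1 k).natAbs, fun i k => ?_⟩
    rw [Int.abs_eq_natAbs]
    norm_cast
    exact (Finset.single_le_sum (f := fun k => ((v i).1 k).natAbs)
      (fun _ _ => Nat.zero_le _) (Finset.mem_univ k)).trans
      (Finset.single_le_sum (f := fun i => ∑ k, ((v i).1 k).natAbs)
      (fun _ _ => Nat.zero_le _) (Finset.mem_univ i))
  let g : ℕ × ((Fin r → ℤ) × T) → (ℕ → K) := fun x n => (n : K) ^ x.1 * (χ x.2 : K) ^ n
  let S : ℕ → Finset (ℕ × ((Fin r → ℤ) × T)) := fun N =>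
    Finset.range (d * N + 1) ×ˢ
      (Fintype.piFinset (fun _ => Finset.Icc (-((C * N : ℕ) : ℤ)) ((C * N : ℕ) : ℤ)) ×ˢ Finset.univ)
  have hS : ∀ N x, x ∈ S N ↔ x.1 ≤ d * N ∧ ∀ k, |x.2.1 k| ≤ C * N := by
    intro N x
    simp [S, abs_le]
  let W : ℕ → Submodule K (ℕ → K) := fun N => Submodule.span K ((S N).image g : Finset (ℕ → K))
  have hgW : ∀ N x, x ∈ S N → g x ∈ W N := fun N x hx =>
    Submodule.subset_span (Finset.mem_coe.2 (Finset.mem_image_of_mem g hx))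
  have hfin : ∀ N, FiniteDimensional K (W N) := fun N => FiniteDimensional.span_finset K _
  have hrank : ∀ N, Module.finrank K (W N) ≤ (d * N + 1) * ((2 * C * N + 1) ^ r * Fintype.card T) := by
    intro N
    refine (finrank_span_finset_le_card _).trans (Finset.card_image_le.trans ?_)
    simp only [S, Finset.card_product, Finset.card_range, Fintype.card_piFinset, Int.card_Icc,
      Finset.prod_const, Finset.card_univ, Fintype.card_fin]
    apply le_of_eq
    congr 3
    push_cast
    have : ((C:ℤ) * N + 1 - -(C * N)) = ((2 * C * N + 1 : ℕ) : ℤ) := by push_cast; ring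
    rw [this, Int.toNat_natCast]
  have h1 : (1 : ℕ → K) ∈ W 0 := by
    have := hgW 0 (0, 0) (by rw [hS]; simp)
    convert this using 1
    funext n
    simp [g, hχ0]
  have hmono : Monotone W := by
    intro M N h
    apply Submodule.span_mono
    rw [Finset.coe_subset]
    apply Finset.image_subset_image
    intro x hx
    rw [hS] at hx ⊢
    refine ⟨hx.1.trans (by gcongr), fun k => (hx.2 k).trans (by gcongr)⟩
  have hmul : ∀ M N x y, x ∈ W M → y ∈ W N → x * y ∈ W (M + N) := by
    intro M N x y hx hy
    have h := Submodule.mul_mem_mul hx hy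
    rw [Submodule.span_mul_span] at h
    refine Submodule.span_le.2 ?_ h
    rintro _ ⟨x, hx, y, hy, rfl⟩
    simp only [Finset.coe_image, Set.mem_image, Finset.mem_coe] at hx hy
    obtain ⟨x, hx, rfl⟩ := hx
    obtain ⟨y, hy, rfl⟩ := hy
    rw [hS] at hx hy
    have := hgW (M + N) (x + y) (by
      rw [hS]
      refine ⟨?_, fun k => ?_⟩
      · rw [mul_add]; exact add_le_add hx.1 hy.1
      · push_cast
        rw [mul_add]; exact (abs_add_le _ _).trans (add_le_add (hx.2 k) (hy.2 k)))
    have hxy : g x * g y = g (x + y) := ?_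
    · change g x * g y ∈ W (M + N)
      rw [hxy]; exact this
    funext n
    simp only [g, Pi.mul_apply, Prod.fst_add, Prod.snd_add, hχ, Units.val_mul]
    ring
  have hf : ∀ i : Fin (r + 2), (fun n : ℕ => a (n + 1 + i)) ∈ W 1 := by
    intro i
    have : (fun n : ℕ => a (n + 1 + i)) = ∑ l, ∑ j ∈ Finset.range (d + 1),
        (((p l).comp (Polynomial.X + Polynomial.C ((1 + i : ℕ) : K))).coeff j * (χ (v l) : K) ^ (1 + i : ℕ)) • g (j, v l) := by
      funext n
      rw [ha _ (by omega), Finset.sum_apply]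
      refine Finset.sum_congr rfl fun l _ => ?_
      rw [Finset.sum_apply]
      have he : (p l).eval ((n + 1 + i : ℕ) : K) = ((p l).comp (Polynomial.X + Polynomial.C ((1 + i : ℕ) : K))).eval (n : K) := by
        rw [Polynomial.eval_comp]; congr 1; simp [add_assoc]
      rw [he, Polynomial.eval_eq_sum_range' (n := d + 1), Finset.sum_mul]
      · refine Finset.sum_congr rfl fun j _ => ?_
        simp only [g, Pi.smul_apply, smul_eq_mul]
        ring
      · rw [Polynomial.natDegree_comp, Polynomial.natDegree_X_add_C, mul_one]
        exact Nat.lt_succ_of_le (hd l)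
    rw [this]
    refine Submodule.sum_mem _ fun l _ => Submodule.sum_mem _ fun j hj => Submodule.smul_mem _ _ (hgW _ _ ?_)
    rw [hS]
    refine ⟨?_, fun k => ?_⟩
    · simpa [Nat.lt_succ_iff] using hj
    · simpa using hC l k
  let E : ℕ := (d * (r + 2) + 1) * ((2 * C * (r + 2) + 1) ^ r * Fintype.card T)
  obtain ⟨P, hP, hP0⟩ := aux_dep W h1 hmul hmono (fun (i : Fin (r + 2)) (n : ℕ) => a (n + 1 + i)) hf (E + 1) (by
    refine (hrank _).trans_lt ?_
    rw [Fintype.card_fin]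
    generalize hD : E + 1 = D
    have hD1 : 1 ≤ D := by omega
    calc (d * ((r + 2) * D) + 1) * ((2 * C * ((r + 2) * D) + 1) ^ r * Fintype.card T)
        ≤ ((d * (r + 2) + 1) * D) * (((2 * C * (r + 2) + 1) * D) ^ r * Fintype.card T) := by
          gcongr
          · nlinarith
          · nlinarith
      _ = E * D ^ (r + 1) := by simp only [E]; rw [mul_pow]; ring
      _ < D * D ^ (r + 1) := by
          apply Nat.mul_lt_mul_of_pos_right
          · omega
          · positivity
      _ = D ^ (r + 2) := by ring)
  refine ⟨P, hP, fun n hn => ?_⟩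
  obtain ⟨m, rfl⟩ : ∃ m, n = m + 1 := ⟨n - 1, by omega⟩
  have h := congrArg (Pi.evalAlgHom K (fun _ : ℕ => K) m) hP0
  rw [← AlgHom.comp_apply, MvPolynomial.comp_aeval] at h
  rw [map_zero] at h
  rw [← MvPolynomial.coe_aeval_eq_eval]
  exact h

theorem aux_rank {A T : Type*} [AddCommGroup A] [AddCommGroup T] [Finite T] {n : ℕ}
    (F : A ≃+ (Fin n →₀ ℤ) × T) : Module.finrank ℚ (ℚ ⊗[ℤ] A) = n := by
  have hsub : Subsingleton (ℚ ⊗[ℤ] T) := by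
    refine subsingleton_of_forall_eq 0 fun x => ?_
    induction x with
    | zero => rfl
    | add x y hx hy => rw [hx, hy, add_zero]
    | tmul a b =>
      have hb : ((Nat.card T : ℕ) : ℤ) • b = 0 := by
        rw [natCast_zsmul]; exact card_nsmul_eq_zero'
      have hc : (Nat.card T : ℚ) ≠ 0 := by exact_mod_cast Nat.card_pos.ne'
      have : a = ((Nat.card T : ℕ) : ℤ) • (a / Nat.card T) := by
        simp; field_simp
      rw [this, TensorProduct.smul_tmul, hb, TensorProduct.tmul_zero]
  have e1 : ℚ ⊗[ℤ] A ≃ₗ[ℚ] ℚ ⊗[ℤ] ((Fin n →₀ ℤ) × T) :=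
    LinearEquiv.baseChange ℤ ℚ _ _ F.toIntLinearEquiv
  have e2 := TensorProduct.prodRight ℤ ℚ ℚ (Fin n →₀ ℤ) T
  rw [(e1.trans e2).finrank_eq, Module.finrank_prod, Module.finrank_zero_of_subsingleton (M := ℚ ⊗[ℤ] T),
    Module.finrank_baseChange]
  simp

/-- Theorem on polynomial recurrences for exponential-polynomial sequences:
if `a n = ∑ p i (n) * μ i ^ n` with nonzero polynomials `p i` and distinct nonzero
`μ i`, and `r` is the rank (torsion-free rank, `dim_ℚ (ℚ ⊗_ℤ A)`) of the multiplicative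
subgroup `A ≤ Kˣ` generated by the `μ i`, then `{a n}` obeys a polynomial recurrence of
length `r + 2`. -/
theorem polynomial_recurrence_of_linear_recurrence
    {K : Type*} [Field K] [IsAlgClosed K] [CharZero K]
    (t : ℕ) (p : Fin t → Polynomial K) (hp : ∀ i, p i ≠ 0)
    (μ : Fin t → Kˣ) (hμ : Function.Injective μ)
    (a : ℕ → K) (ha : ∀ n : ℕ, 1 ≤ n → a n = ∑ i, (p i).eval (n : K) * (μ i : K) ^ n)
    (r : ℕ)
    (hr : r = Module.finrank ℚ
      (ℚ ⊗[ℤ] Additive ↥(Subgroup.closure (Set.range μ)))) :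
    ∃ P : MvPolynomial (Fin (r + 2)) K, P ≠ 0 ∧
      ∀ n : ℕ, 1 ≤ n → MvPolynomial.eval (fun i : Fin (r + 2) => a (n + i)) P = 0 := by
  classical
  have hfg : AddGroup.FG (Additive ↥(Subgroup.closure (Set.range μ))) := by
    rw [← GroupFG.iff_add_fg]
    exact Group.closure_finite_fg _
  obtain ⟨n, ι, _, q, hq, e, ⟨F⟩⟩ := AddCommGroup.equiv_free_prod_directSum_zmod
    (Additive ↥(Subgroup.closure (Set.range μ)))
  have hT : Finite (DirectSum ι fun i => ZMod (q i ^ e i)) := by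
    have : ∀ i, NeZero (q i ^ e i) := fun i => ⟨pow_ne_zero _ (hq i).ne_zero⟩
    exact Finite.of_equiv _ (DirectSum.addEquivProd (fun i => ZMod (q i ^ e i))).symm.toEquiv
  obtain rfl : r = n := by
    rw [hr, aux_rank F]
  let G := F.trans ((Finsupp.linearEquivFunOnFinite ℤ ℤ (Fin r)).toAddEquiv.prodCongr (AddEquiv.refl _))
  refine aux_main r t (fun x => ((G.symm x).toMul : Kˣ)) (by simp) (by intro x y; simp) p
    (fun i => G (Additive.ofMul ⟨μ i, Subgroup.subset_closure (Set.mem_range_self i)⟩)) a ?_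
  intro m hm
  rw [ha m hm]
  simp
end

section
/- Let K be an algebraically closed field of characteristic zero, let c_1, …, c_t be nonzero elements of K and μ_1, …, μ_t distinct nonzero elements of K, and define a_n = ∑_{i=1}^t c_i μ_i^n for n ≥ 1 (so {a_n} satisfies a simple linear recurrence). Let A ⊆ K^* be the multiplicative subgroup generated by μ_1, …, μ_t and let r be the rank of A (i.e. dim_ℚ(ℚ ⊗_ℤ A)). Then the sequence {a_n}_{n≥1} obeys a polynomial recurrence of length r + 1. -/
open scoped TensorProduct

/-- The free part of a finitely generated abelian group has rank at most `dim_ℚ (ℚ ⊗ A)`. -/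
lemma PolyRec.exists_equiv (A : Type*) [AddCommGroup A] [AddGroup.FG A] :
    ∃ (n : ℕ) (T : Type) (_ : AddCommGroup T) (_ : Fintype T) (_ : A ≃+ (Fin n → ℤ) × T),
      n ≤ Module.finrank ℚ (ℚ ⊗[ℤ] A) := by
  classical
  obtain ⟨n, ι, _, p, hp, e, ⟨f⟩⟩ := AddCommGroup.equiv_free_prod_directSum_zmod A
  have : ∀ i, NeZero (p i ^ e i) := fun i => ⟨pow_ne_zero _ (hp i).ne_zero⟩
  let f' : A ≃+ (Fin n → ℤ) × (∀ i, ZMod (p i ^ e i)) :=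
    f.trans (Finsupp.addEquivFunOnFinite.prodCongr (DirectSum.addEquivProd _))
  refine ⟨n, ∀ i, ZMod (p i ^ e i), inferInstance, inferInstance, f', ?_⟩
  have : Module.Finite ℤ A := Module.Finite.iff_addGroup_fg.mpr inferInstance
  have h1 : Module.finrank ℚ (ℚ ⊗[ℤ] A) = Module.finrank ℤ A :=
    (TensorProduct.isBaseChange ℤ A ℚ).finrank_eq
  rw [h1]
  have := LinearMap.finrank_le_finrank_of_surjective
    (f := ((AddMonoidHom.fst _ _).comp f'.toAddMonoidHom).toIntLinearMap)
    (fun x => ⟨f'.symm (x, 0), by simp⟩)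
  simpa using this

/-- The set of group elements whose free part has coordinates bounded by `k`. -/
noncomputable def PolyRec.box {G T : Type*} [CommGroup G] [AddCommGroup T] {n : ℕ}
    (e : Additive G ≃+ (Fin n → ℤ) × T) (k : ℕ) : Set G :=
  {g | ∀ j, |(e (Additive.ofMul g)).1 j| ≤ (k : ℤ)}

lemma PolyRec.box_mul {G T : Type*} [CommGroup G] [AddCommGroup T] {n : ℕ}
    (e : Additive G ≃+ (Fin n → ℤ) × T) {k l : ℕ} {g h : G} (hg : g ∈ PolyRec.box e k)
    (hh : h ∈ PolyRec.box e l) : g * h ∈ PolyRec.box e (k + l) := by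
  intro j
  have h1 := hg j
  have h2 := hh j
  simp only [ofMul_mul, map_add, Prod.fst_add, Pi.add_apply]
  push_cast
  exact (abs_add_le _ _).trans (add_le_add h1 h2)

lemma PolyRec.box_subset {G T : Type*} [CommGroup G] [AddCommGroup T] [Fintype T] {n : ℕ}
    (e : Additive G ≃+ (Fin n → ℤ) × T) (k : ℕ) :
    ∃ S : Finset G, PolyRec.box e k ⊆ S ∧ S.card ≤ (2 * k + 1) ^ n * Fintype.card T := by
  classical
  refine ⟨((Fintype.piFinset fun _ : Fin n => Finset.Icc (-(k : ℤ)) k) ×ˢ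
    (Finset.univ : Finset T)).image fun x => (e.symm x).toMul, ?_, ?_⟩
  · intro g hg
    simp only [Finset.coe_image, Set.mem_image]
    refine ⟨e (Additive.ofMul g), ?_, by simp⟩
    simp only [Finset.mem_coe, Finset.mem_product, Fintype.mem_piFinset, Finset.mem_Icc,
      Finset.mem_univ, and_true]
    exact fun j => abs_le.mp (hg j)
  · refine Finset.card_image_le.trans ?_
    rw [Finset.card_product, Fintype.card_piFinset]
    simp only [Int.card_Icc, Finset.prod_const, Finset.card_univ, Fintype.card_fin]
    have : ((k : ℤ) + 1 - -(k : ℤ)).toNat = 2 * k + 1 := by omega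
    rw [this]

/-- The span of the exponential sequences with base in a box. -/
noncomputable def PolyRec.V {K G T : Type*} [Field K] [CommGroup G] [AddCommGroup T] {n : ℕ}
    (ψ : G →* K) (e : Additive G ≃+ (Fin n → ℤ) × T) (k : ℕ) : Submodule K (ℕ → K) :=
  Submodule.span K ((fun g : G => fun m : ℕ => ψ g ^ m) '' PolyRec.box e k)

section
variable {K G T : Type*} [Field K] [CommGroup G] [AddCommGroup T] {n : ℕ}
    (ψ : G →* K) (e : Additive G ≃+ (Fin n → ℤ) × T)

lemma PolyRec.one_mem : (1 : ℕ → K) ∈ PolyRec.V ψ e 0 := by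
  apply Submodule.subset_span
  refine ⟨1, fun j => by simp, ?_⟩
  ext m; simp

lemma PolyRec.mul_mem {k l : ℕ} {x y : ℕ → K} (hx : x ∈ PolyRec.V ψ e k)
    (hy : y ∈ PolyRec.V ψ e l) : x * y ∈ PolyRec.V ψ e (k + l) := by
  have h := Submodule.mul_mem_mul hx hy
  unfold PolyRec.V at h
  rw [Submodule.span_mul_span] at h
  refine Submodule.span_mono ?_ h
  rintro _ ⟨_, ⟨g, hg, rfl⟩, _, ⟨g', hg', rfl⟩, rfl⟩
  refine ⟨g * g', PolyRec.box_mul e hg hg', ?_⟩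
  ext m; simp [mul_pow]

lemma PolyRec.V_mono {k l : ℕ} (h : k ≤ l) : PolyRec.V ψ e k ≤ PolyRec.V ψ e l := by
  refine Submodule.span_mono (Set.image_mono ?_)
  intro g hg j
  exact (hg j).trans (by exact_mod_cast h)

lemma PolyRec.pow_mem {k : ℕ} {x : ℕ → K} (hx : x ∈ PolyRec.V ψ e k) (d : ℕ) :
    x ^ d ∈ PolyRec.V ψ e (d * k) := by
  induction d with
  | zero => simpa using PolyRec.one_mem ψ e
  | succ d ih =>
    rw [pow_succ, Nat.succ_mul]
    exact PolyRec.mul_mem ψ e ih hx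

lemma PolyRec.prod_mem {ι : Type*} (s : Finset ι) {k : ι → ℕ} {x : ι → ℕ → K}
    (hx : ∀ i, x i ∈ PolyRec.V ψ e (k i)) :
    ∏ i ∈ s, x i ∈ PolyRec.V ψ e (∑ i ∈ s, k i) := by
  classical
  induction s using Finset.induction_on with
  | empty => simpa using PolyRec.one_mem ψ e
  | insert a s ha ih =>
    rw [Finset.prod_insert ha, Finset.sum_insert ha]
    exact PolyRec.mul_mem ψ e (hx a) ih

/-- Dimension count: `r + 1` sequences in the span of a box are algebraically dependent. -/
lemma PolyRec.exists_poly [Fintype T] {r : ℕ} (hn : n ≤ r) {M : ℕ} (x : Fin (r + 1) → ℕ → K)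
    (hx : ∀ i, x i ∈ PolyRec.V ψ e M) :
    ∃ P : MvPolynomial (Fin (r + 1)) K, P ≠ 0 ∧ MvPolynomial.aeval x P = 0 := by
  classical
  by_contra! hcon
  have hinj : Function.Injective (MvPolynomial.aeval x : MvPolynomial (Fin (r + 1)) K →ₐ[K] _) := by
    rw [injective_iff_map_eq_zero]
    intro P hP
    by_contra h
    exact hcon P h hP
  set C := (2 * ((r + 1) * M) + 1) ^ r * Fintype.card T with hC
  set d := C + 1 with hd
  let ex : (Fin (r + 1) → Fin d) → (Fin (r + 1) →₀ ℕ) := fun u =>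
    Finsupp.equivFunOnFinite.symm fun i => (u i : ℕ)
  have hex : Function.Injective ex := by
    intro u v h
    funext i
    have := DFunLike.congr_fun h i
    exact Fin.ext this
  have hli := ((MvPolynomial.basisMonomials (Fin (r + 1)) K).linearIndependent.map'
    (MvPolynomial.aeval x).toLinearMap (LinearMap.ker_eq_bot.mpr hinj)).comp ex hex
  obtain ⟨S, hS, hcard⟩ := PolyRec.box_subset e ((r + 1) * (d * M))
  have hle := linearIndependent_le_span' _ hli
    ((S.image fun g : G => fun m : ℕ => ψ g ^ m : Finset (ℕ → K)) : Set (ℕ → K)) (by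
      rintro _ ⟨u, rfl⟩
      have h1 : ∏ i, x i ^ (u i : ℕ) ∈ PolyRec.V ψ e ((r + 1) * (d * M)) := by
        refine PolyRec.V_mono ψ e ?_ (PolyRec.prod_mem ψ e Finset.univ
          (fun i => PolyRec.pow_mem ψ e (hx i) (u i : ℕ)))
        calc ∑ i, (u i : ℕ) * M ≤ ∑ _i : Fin (r + 1), d * M :=
              Finset.sum_le_sum fun i _ => Nat.mul_le_mul_right _ (u i).2.le
          _ = _ := by simp
      have h2 : (⇑(MvPolynomial.aeval x).toLinearMap ∘
          ⇑(MvPolynomial.basisMonomials (Fin (r + 1)) K)) (ex u) = ∏ i, x i ^ (u i : ℕ) := by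
        simp [ex, MvPolynomial.aeval_monomial, Finsupp.prod_fintype]
      change (⇑(MvPolynomial.aeval x).toLinearMap ∘
          ⇑(MvPolynomial.basisMonomials (Fin (r + 1)) K)) (ex u) ∈ Submodule.span K _
      rw [h2]
      refine Submodule.span_mono ?_ h1
      rw [Finset.coe_image]
      exact Set.image_mono hS)
  rw [Cardinal.mk_fintype, Nat.cast_le] at hle
  simp only [Fintype.card_fun, Fintype.card_fin, Finset.coe_sort_coe, Fintype.card_coe] at hle
  have h3 := (hle.trans Finset.card_image_le).trans hcard
  have h4 : (2 * ((r + 1) * (d * M)) + 1) ^ n ≤ ((2 * ((r + 1) * M) + 1) * d) ^ r := by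
    refine (Nat.pow_le_pow_right (by omega) hn).trans (Nat.pow_le_pow_left ?_ _)
    nlinarith
  have h5 : d ^ (r + 1) ≤ d ^ r * C := by
    refine h3.trans ((Nat.mul_le_mul_right _ h4).trans (le_of_eq ?_))
    rw [hC, mul_pow]; ring
  rw [pow_succ] at h5
  have h6 := Nat.le_of_mul_le_mul_left h5 (by positivity)
  omega

end

/-- Simple-linear-recurrence case: if `a n = ∑ c i * μ i ^ n` with nonzero constants
`c i` and distinct nonzero `μ i`, and `r` is the rank (`dim_ℚ (ℚ ⊗_ℤ A)`) of the
multiplicative subgroup `A ≤ Kˣ` generated by the `μ i`, then `{a n}` obeys a polynomial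
recurrence of length `r + 1`. -/
theorem polynomial_recurrence_of_simple_linear_recurrence
    {K : Type*} [Field K] [IsAlgClosed K] [CharZero K]
    (t : ℕ) (c : Fin t → K) (hc : ∀ i, c i ≠ 0)
    (μ : Fin t → Kˣ) (hμ : Function.Injective μ)
    (a : ℕ → K) (ha : ∀ n : ℕ, 1 ≤ n → a n = ∑ i, c i * (μ i : K) ^ n)
    (r : ℕ)
    (hr : r = Module.finrank ℚ
      (ℚ ⊗[ℤ] Additive ↥(Subgroup.closure (Set.range μ)))) :
    ∃ P : MvPolynomial (Fin (r + 1)) K, P ≠ 0 ∧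
      ∀ n : ℕ, 1 ≤ n → MvPolynomial.eval (fun i : Fin (r + 1) => a (n + i)) P = 0 := by
  classical
  have : Group.FG ↥(Subgroup.closure (Set.range μ)) :=
    Group.closure_finite_fg (Set.range μ)
  obtain ⟨n, T, _, _, e, hn⟩ :=
    PolyRec.exists_equiv (Additive ↥(Subgroup.closure (Set.range μ)))
  rw [← hr] at hn
  let ψ : ↥(Subgroup.closure (Set.range μ)) →* K :=
    (Units.coeHom K).comp (Subgroup.closure (Set.range μ)).subtype
  let ν : Fin t → ↥(Subgroup.closure (Set.range μ)) := fun i =>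
    ⟨μ i, Subgroup.subset_closure ⟨i, rfl⟩⟩
  let M : ℕ := ∑ i, ∑ j, ((e (Additive.ofMul (ν i))).1 j).natAbs
  have hν : ∀ i, ν i ∈ PolyRec.box e M := by
    intro i j
    rw [Int.abs_eq_natAbs]
    have h1 : ((e (Additive.ofMul (ν i))).1 j).natAbs ≤
        ∑ j, ((e (Additive.ofMul (ν i))).1 j).natAbs :=
      Finset.single_le_sum (f := fun j => ((e (Additive.ofMul (ν i))).1 j).natAbs)
        (fun _ _ => Nat.zero_le _) (Finset.mem_univ j)
    have h2 : ∑ j, ((e (Additive.ofMul (ν i))).1 j).natAbs ≤ M :=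
      Finset.single_le_sum (f := fun i => ∑ j, ((e (Additive.ofMul (ν i))).1 j).natAbs)
        (fun _ _ => Nat.zero_le _) (Finset.mem_univ i)
    exact_mod_cast h1.trans h2
  let x : Fin (r + 1) → ℕ → K := fun k m => ∑ i, c i * (μ i : K) ^ (m + k)
  have hx : ∀ k, x k ∈ PolyRec.V ψ e M := by
    intro k
    have : x k = ∑ i, (c i * (μ i : K) ^ (k : ℕ)) • (fun m : ℕ => ψ (ν i) ^ m) := by
      ext m
      simp only [x, Finset.sum_apply, Pi.smul_apply, smul_eq_mul]
      refine Finset.sum_congr rfl fun i _ => ?_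
      have : ψ (ν i) = (μ i : K) := rfl
      rw [this, pow_add]; ring
    rw [this]
    exact Submodule.sum_mem _ fun i _ => Submodule.smul_mem _ _
      (Submodule.subset_span ⟨ν i, hν i, rfl⟩)
  obtain ⟨P, hP, hP0⟩ := PolyRec.exists_poly ψ e hn x hx
  refine ⟨P, hP, fun m hm => ?_⟩
  have h1 := congr_arg (Pi.evalAlgHom K (fun _ : ℕ => K) m) hP0
  rw [map_zero, MvPolynomial.comp_aeval_apply, MvPolynomial.aeval_eq_eval] at h1
  convert h1 using 3
  funext k
  exact ha _ (by omega)
end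

section
/- Let K be a field, let {a_n}_{n≥1} be a sequence with values in K, and let ℓ ≥ 1. Then {a_n} satisfies a homogeneous linear recurrence of length at most ℓ — that is, there exist x_1, …, x_ℓ ∈ K, not all zero, such that x_1 a_n + x_2 a_{n+1} + ⋯ + x_ℓ a_{n+ℓ−1} = 0 for all n ≥ 1 — if and only if det A_{ℓ,n} = 0 for every n ≥ ℓ, where A_{ℓ,n} is the ℓ × ℓ Toeplitz matrix with (i,j) entry a_{n−i+j} (1 ≤ i, j ≤ ℓ). -/
/-- The size `l` Hankel matrix of `b` starting at `m` has trivial kernel. -/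
def HankelNondeg {K : Type*} [Field K] (b : ℕ → K) (l m : ℕ) : Prop :=
  ∀ w : ℕ → K, (∀ i < l, ∑ j ∈ Finset.range l, w j * b (m + i + j) = 0) → ∀ j < l, w j = 0

lemma hankel_last {K : Type*} [Field K] {b : ℕ → K} {l m : ℕ} (S : HankelNondeg b l m)
    {v : ℕ → K} (hv : ∀ i < l, ∑ j ∈ Finset.range (l+1), v j * b (m + i + j) = 0)
    (h0 : v l = 0) : ∀ j ≤ l, v j = 0 := by
  intro j hj
  rcases hj.lt_or_eq with h | h
  · refine S v ?_ j h
    intro i hi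
    have := hv i hi
    rw [Finset.sum_range_succ, h0] at this
    simpa using this
  · rw [h, h0]

lemma hankel_first {K : Type*} [Field K] {b : ℕ → K} {l m : ℕ} (S : HankelNondeg b l (m+1))
    {v : ℕ → K} (hv : ∀ i < l, ∑ j ∈ Finset.range (l+1), v j * b (m + i + j) = 0)
    (h0 : v 0 = 0) : ∀ j ≤ l, v j = 0 := by
  intro j hj
  rcases j with _ | j
  · exact h0
  · refine S (fun j => v (j+1)) ?_ j (by omega)
    intro i hi
    have := hv i hi
    rw [Finset.sum_range_succ', h0] at this
    rw [← this]
    simp only [zero_mul, add_zero]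
    refine Finset.sum_congr rfl fun k _ => ?_
    congr 2; ring

lemma comb_zero {K : Type*} [Field K] {b : ℕ → K} {l n : ℕ} {u v : ℕ → K} (c : K)
    (hu : ∑ j ∈ Finset.range (l+1), u j * b (n + j) = 0)
    (hv : ∑ j ∈ Finset.range (l+1), v j * b (n + j) = 0) :
    ∑ j ∈ Finset.range (l+1), (u j - c * v j) * b (n + j) = 0 := by
  simp only [sub_mul, Finset.sum_sub_distrib, mul_assoc, ← Finset.mul_sum, hu, hv]
  simp

lemma hankel_prop_last {K : Type*} [Field K] {b : ℕ → K} {l m : ℕ} (S : HankelNondeg b l m)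
    {u v : ℕ → K} (hu : ∀ i < l, ∑ j ∈ Finset.range (l+1), u j * b (m + i + j) = 0)
    (hv : ∀ i < l, ∑ j ∈ Finset.range (l+1), v j * b (m + i + j) = 0)
    (h0 : v l ≠ 0) : ∃ c, ∀ j ≤ l, u j = c * v j := by
  refine ⟨u l / v l, fun j hj => ?_⟩
  have := hankel_last S (v := fun j => u j - u l / v l * v j)
    (fun i hi => comb_zero _ (hu i hi) (hv i hi)) (by field_simp; ring) j hj
  exact sub_eq_zero.1 this

lemma hankel_prop_first {K : Type*} [Field K] {b : ℕ → K} {l m : ℕ} (S : HankelNondeg b l (m+1))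
    {u v : ℕ → K} (hu : ∀ i < l, ∑ j ∈ Finset.range (l+1), u j * b (m + i + j) = 0)
    (hv : ∀ i < l, ∑ j ∈ Finset.range (l+1), v j * b (m + i + j) = 0)
    (h0 : v 0 ≠ 0) : ∃ c, ∀ j ≤ l, u j = c * v j := by
  refine ⟨u 0 / v 0, fun j hj => ?_⟩
  have := hankel_first S (v := fun j => u j - u 0 / v 0 * v j)
    (fun i hi => comb_zero _ (hu i hi) (hv i hi)) (by field_simp; ring) j hj
  exact sub_eq_zero.1 this

lemma hankel_step {K : Type*} [Field K] {b : ℕ → K} {l m : ℕ} (S : HankelNondeg b l (m+1))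
    {v : ℕ → K} (hv : ∀ i < l + 1, ∑ j ∈ Finset.range (l+1), v j * b (m + i + j) = 0)
    (hne : ∃ j < l + 1, v j ≠ 0) : HankelNondeg b l m ∧ HankelNondeg b l (m+2) := by
  obtain ⟨j0, hj0, hne⟩ := hne
  have hv1 : ∀ i < l, ∑ j ∈ Finset.range (l+1), v j * b (m + i + j) = 0 :=
    fun i hi => hv i (by omega)
  have hv2 : ∀ i < l, ∑ j ∈ Finset.range (l+1), v j * b (m + 1 + i + j) = 0 := by
    intro i hi
    have := hv (i+1) (by omega)
    rwa [show m + (i+1) = m + 1 + i by ring] at this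
  have f0 : v 0 ≠ 0 := fun h => hne (hankel_first S hv1 h j0 (by omega))
  have fl : v l ≠ 0 := fun h => hne (hankel_last S hv2 h j0 (by omega))
  constructor
  · intro w hw
    obtain ⟨c, hc⟩ := hankel_prop_first S (u := fun j => if j = l then 0 else w j) (by
      intro i hi
      rw [Finset.sum_range_succ]
      simp only [if_true, zero_mul, add_zero]
      rw [← hw i hi]
      refine Finset.sum_congr rfl fun k hk => ?_
      rw [if_neg (Finset.mem_range.1 hk).ne]) hv1 f0
    have c0 : c = 0 := by
      have := hc l le_rfl
      simpa [fl] using this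
    intro j hj
    have := hc j hj.le
    simpa [c0, hj.ne] using this
  · intro w hw
    obtain ⟨c, hc⟩ := hankel_prop_last S (u := fun j => if j = 0 then 0 else w (j-1)) (by
      intro i hi
      rw [Finset.sum_range_succ']
      simp only [if_true, zero_mul, add_zero]
      rw [← hw i hi]
      refine Finset.sum_congr rfl fun k hk => ?_
      rw [if_neg (by omega)]
      congr 2; ring) hv2 fl
    have c0 : c = 0 := by
      have := hc 0 (by omega)
      simpa [f0] using this
    intro j hj
    have := hc (j+1) hj
    simpa [c0] using this

lemma hankel_main {K : Type*} [Field K] (l : ℕ) : ∀ b : ℕ → K,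
    (∀ m, ∃ w : ℕ → K, (∃ j < l, w j ≠ 0) ∧
      ∀ i < l, ∑ j ∈ Finset.range l, w j * b (m + i + j) = 0) →
    ∃ x : ℕ → K, (∃ j < l, x j ≠ 0) ∧ ∀ m, ∑ j ∈ Finset.range l, x j * b (m + j) = 0 := by
  induction l with
  | zero =>
    intro b h
    obtain ⟨w, ⟨j, hj, _⟩, _⟩ := h 0
    omega
  | succ l ih =>
    intro b h
    by_cases hS : ∃ m, HankelNondeg b l (m+1)
    · have step : ∀ m, HankelNondeg b l (m+1) →
          HankelNondeg b l m ∧ HankelNondeg b l (m+2) := by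
        intro m hm
        obtain ⟨w, hw, hw'⟩ := h m
        exact hankel_step hm hw' hw
      obtain ⟨m1, hm1⟩ := hS
      have h0 : ∀ m, HankelNondeg b l m → HankelNondeg b l 0 := by
        intro m
        induction m with
        | zero => exact id
        | succ m ihm => exact fun hm => ihm (step m hm).1
      have h1 : ∀ m, HankelNondeg b l (m+1) → HankelNondeg b l 1 := by
        intro m
        induction m with
        | zero => exact id
        | succ m ihm => exact fun hm => ihm (step (m+1) hm).1
      have hall : ∀ m, HankelNondeg b l (m+1) := by
        intro m
        induction m with
        | zero => exact h1 _ hm1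
        | succ m ihm => exact (step m ihm).2
      obtain ⟨v, hv, hv'⟩ := h 0
      refine ⟨v, hv, ?_⟩
      have key : ∀ m, ∀ i < l + 1, ∑ j ∈ Finset.range (l+1), v j * b (m + i + j) = 0 := by
        intro m
        induction m with
        | zero => exact hv'
        | succ m ihm =>
          obtain ⟨u, ⟨j0, hj0, hu⟩, hu'⟩ := h (m+1)
          have hu1 : ∀ i < l, ∑ j ∈ Finset.range (l+1), u j * b (m + 1 + i + j) = 0 :=
            fun i hi => hu' i (by omega)
          have ul : u l ≠ 0 := fun hh => hu (hankel_last (hall m) hu1 hh j0 (by omega))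
          obtain ⟨c, hc⟩ := hankel_prop_last (hall m) (u := v) (by
            intro i hi
            have := ihm (i+1) (by omega)
            rwa [show m + (i+1) = m + 1 + i by ring] at this) hu1 ul
          intro i hi
          have : ∑ j ∈ Finset.range (l+1), v j * b (m + 1 + i + j)
              = c * ∑ j ∈ Finset.range (l+1), u j * b (m + 1 + i + j) := by
            rw [Finset.mul_sum]
            refine Finset.sum_congr rfl fun k hk => ?_
            rw [hc k (by have := Finset.mem_range.1 hk; omega), mul_assoc]
          rw [this, hu' i hi, mul_zero]
      intro m
      simpa using key m 0 (by omega)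
    · push Not at hS
      obtain ⟨y, ⟨j0, hj0, hy⟩, hy'⟩ := ih (fun n => b (n+1)) (by
        intro m
        have := hS m
        unfold HankelNondeg at this
        push Not at this
        obtain ⟨w, hw, j, hj, hne⟩ := this
        refine ⟨w, ⟨j, hj, hne⟩, fun i hi => ?_⟩
        rw [← hw i hi]
        refine Finset.sum_congr rfl fun k _ => ?_
        congr 2; ring)
      refine ⟨fun j => if j = 0 then 0 else y (j-1), ⟨j0+1, by omega, by simpa using hy⟩, ?_⟩
      intro m
      rw [Finset.sum_range_succ']
      have := hy' m
      simp only [add_assoc] at this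
      simpa using this

/-- A sequence `{a n}` with values in a field satisfies a homogeneous linear recurrence of
length at most `ℓ` if and only if all the `ℓ × ℓ` Toeplitz determinants
`det (a (n - i + j))_{1 ≤ i,j ≤ ℓ}` vanish for `n ≥ ℓ`. -/
theorem linear_recurrence_iff_toeplitz_det_eq_zero
    {K : Type*} [Field K] (a : ℕ → K) (ℓ : ℕ) (hℓ : 1 ≤ ℓ) :
    (∃ x : Fin ℓ → K, x ≠ 0 ∧ ∀ n : ℕ, 1 ≤ n → ∑ j, x j * a (n + j) = 0) ↔
      ∀ n : ℕ, ℓ ≤ n →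
        Matrix.det (Matrix.of fun i j : Fin ℓ => a (n - (i : ℕ) + (j : ℕ))) = 0 := by
  constructor
  · rintro ⟨x, hx, h⟩ n hn
    rw [← Matrix.exists_mulVec_eq_zero_iff]
    refine ⟨x, hx, ?_⟩
    ext i
    have := h (n - i) (by have := i.2; omega)
    simp only [Matrix.mulVec, dotProduct, Matrix.of_apply, Pi.zero_apply]
    rw [← this]
    exact Finset.sum_congr rfl fun k _ => mul_comm _ _
  · intro h
    obtain ⟨x, ⟨j0, hj0, hx⟩, hx'⟩ := hankel_main ℓ (fun n => a (n+1)) (by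
      intro m
      obtain ⟨v, hv, hv'⟩ := Matrix.exists_mulVec_eq_zero_iff.2 (h (m + ℓ) (by omega))
      obtain ⟨j, hj⟩ := Function.ne_iff.1 hv
      refine ⟨fun k => if hk : k < ℓ then v ⟨k, hk⟩ else 0, ⟨j, j.2, by simpa using hj⟩, ?_⟩
      intro i hi
      have := congrFun hv' ⟨ℓ - 1 - i, by omega⟩
      simp only [Matrix.mulVec, dotProduct, Matrix.of_apply, Pi.zero_apply] at this
      refine Eq.trans ?_ this
      rw [Finset.sum_range]
      refine Finset.sum_congr rfl fun k _ => ?_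
      simp only [dif_pos k.2]
      rw [mul_comm]
      congr 2
      omega)
    refine ⟨fun j => x j, Function.ne_iff.2 ⟨⟨j0, hj0⟩, hx⟩, ?_⟩
    intro n hn
    have := hx' (n - 1)
    rw [Finset.sum_range] at this
    rw [← this]
    refine Finset.sum_congr rfl fun k _ => ?_
    congr 2
    omega
end

section
/- Let K be a field, let ℓ ≥ 1, let μ_1, …, μ_ℓ and c_1, …, c_ℓ be nonzero elements of K, and set a_n = ∑_{i=1}^ℓ c_i μ_i^n. Then for every n ≥ ℓ, the determinant of the ℓ × ℓ Toeplitz matrix A_{ℓ,n} with (i,j) entry a_{n−i+j} has the factorization det A_{ℓ,n} = (−1)^{ℓ(ℓ−1)/2} · c_1 ⋯ c_ℓ · (μ_1 ⋯ μ_ℓ)^{n−ℓ+1} · ∏_{1 ≤ i < j ≤ ℓ} (μ_i − μ_j)^2. -/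
/-- Toeplitz determinant factorization: if `a n = ∑ c i * μ i ^ n` with nonzero `c i`
and nonzero `μ i`, then for `n ≥ ℓ`,
`det (a (n - i + j))_{1 ≤ i,j ≤ ℓ}
  = (-1)^(ℓ(ℓ-1)/2) * (∏ c i) * (∏ μ i)^(n - ℓ + 1) * ∏_{i < j} (μ i - μ j)^2`. -/
theorem toeplitz_det_factorization
    {K : Type*} [Field K] (ℓ : ℕ) (μ c : Fin ℓ → K)
    (hμ : ∀ i, μ i ≠ 0) (hc : ∀ i, c i ≠ 0)
    (a : ℕ → K) (ha : ∀ n : ℕ, 1 ≤ n → a n = ∑ i, c i * μ i ^ n) :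
    ∀ n : ℕ, ℓ ≤ n →
      Matrix.det (Matrix.of fun i j : Fin ℓ => a (n - (i : ℕ) + (j : ℕ))) =
        (-1 : K) ^ (ℓ * (ℓ - 1) / 2) * (∏ i, c i) * (∏ i, μ i) ^ (n - ℓ + 1) *
          ∏ i, ∏ j ∈ Finset.Ioi i, (μ i - μ j) ^ 2 := by
  intro n hn
  have hM : (Matrix.of fun i j : Fin ℓ => a (n - (i : ℕ) + (j : ℕ))) =
      (Matrix.projVandermonde (fun _ => (1 : K)) μ).transpose *
        (Matrix.diagonal (fun k => c k * μ k ^ (n - ℓ + 1)) * Matrix.vandermonde μ) := by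
    ext i j
    rw [Matrix.of_apply, ha _ (by omega), Matrix.mul_apply]
    refine Finset.sum_congr rfl fun k _ => ?_
    rw [Matrix.diagonal_mul, Matrix.transpose_apply, Matrix.projVandermonde_apply,
      Matrix.vandermonde_apply]
    have h : n - (i : ℕ) + (j : ℕ) = (i.rev : ℕ) + (n - ℓ + 1) + j := by
      rw [Fin.val_rev]; omega
    rw [h, pow_add, pow_add]
    ring
  have hsum : ∑ i : Fin ℓ, (Finset.Ioi i).card = ℓ * (ℓ - 1) / 2 := by
    simp only [Fin.card_Ioi]
    rw [Fin.sum_univ_eq_sum_range (fun i => ℓ - 1 - i) ℓ,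
      Finset.sum_range_reflect (fun i => i) ℓ, Finset.sum_range_id]
  have hs : ∏ i, ∏ j ∈ Finset.Ioi i, (μ j - μ i) =
      (-1 : K) ^ (ℓ * (ℓ - 1) / 2) * ∏ i, ∏ j ∈ Finset.Ioi i, (μ i - μ j) := by
    rw [← hsum, ← Finset.prod_pow_eq_pow_sum, ← Finset.prod_mul_distrib]
    refine Finset.prod_congr rfl fun i _ => ?_
    rw [← Finset.prod_const, ← Finset.prod_mul_distrib]
    refine Finset.prod_congr rfl fun j _ => ?_
    ring
  rw [hM, Matrix.det_mul, Matrix.det_mul, Matrix.det_transpose, Matrix.det_diagonal,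
    Matrix.det_vandermonde, Matrix.det_projVandermonde, hs, Finset.prod_mul_distrib,
    Finset.prod_pow]
  simp only [one_mul, Finset.prod_pow]
  ring
end

section
/- Let K be a field of characteristic zero and let p ∈ K[x] be a monic polynomial of degree ℓ ≥ 1. Then the (ℓ+1) × (ℓ+1) Toeplitz determinant Δ(x) = det( p(x − i + j) )_{i,j=0}^{ℓ}, regarded as a polynomial in x, is the constant (ℓ!)^{ℓ+1}, independent of p. -/
open Polynomial

lemma eval_add_expand {R : Type*} [CommRing R] (n : ℕ) (Q : R[X]) (hQ : Q.natDegree ≤ n) (a b : R) :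
    Q.eval (a + b) = ∑ m : Fin (n + 1), ∑ k : Fin (n + 1),
      a ^ (m : ℕ) * (((k : ℕ) + m).choose m * Q.coeff (k + m)) * b ^ (k : ℕ) := by
  have h1 : Q.eval (a + b) = (taylor b Q).eval a := by rw [taylor_eval]
  rw [h1, eval_eq_sum_range' (n := n + 1) (by rw [natDegree_taylor]; omega), Finset.sum_range]
  refine Finset.sum_congr rfl fun m _ => ?_
  rw [taylor_coeff, eval_eq_sum_range' (n := n + 1)
    (lt_of_le_of_lt (natDegree_hasseDeriv_le Q m) (by omega)), Finset.sum_range, Finset.sum_mul]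
  refine Finset.sum_congr rfl fun k _ => ?_
  rw [hasseDeriv_coeff]
  ring

lemma sf_arith (n : ℕ) : (∏ i : Fin (n + 1), (n.choose i)) * n.superFactorial * n.superFactorial
    = n.factorial ^ (n + 1) := by
  have h : n.superFactorial = ∏ i ∈ Finset.range (n + 1), i.factorial := by
    rw [Finset.prod_range_succ']
    simp [← Nat.prod_range_factorial_succ]
  have h' : n.superFactorial = ∏ i ∈ Finset.range (n + 1), (n - i).factorial := by
    rw [h, ← Finset.prod_range_reflect]
    simp
  nth_rewrite 1 [h]
  rw [h', ← Finset.prod_range (fun i => n.choose i), ← Finset.prod_mul_distrib,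
    ← Finset.prod_mul_distrib, Finset.prod_congr rfl (g := fun _ => n.factorial)]
  · simp
  · intro i hi
    exact Nat.choose_mul_factorial_mul_factorial (by simpa [Nat.lt_succ_iff] using hi)

lemma det_eval_sub {R : Type*} [CommRing R] (n : ℕ) (Q : R[X]) (hQ : Q.natDegree ≤ n) :
    Matrix.det (Matrix.of fun i j : Fin (n + 1) => Q.eval (-((i : ℕ) : R) + ((j : ℕ) : R))) =
      (n.factorial : R) ^ (n + 1) * Q.coeff n ^ (n + 1) := by
  set H : Matrix (Fin (n + 1)) (Fin (n + 1)) R := Matrix.of fun m k =>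
    (((k : ℕ) + m.rev).choose m.rev * Q.coeff (k + m.rev)) with hH
  set V := Matrix.vandermonde (fun i : Fin (n + 1) => ((i : ℕ) : R)) with hV
  set W := Matrix.projVandermonde (fun _ : Fin (n + 1) => (1 : R))
    (fun i : Fin (n + 1) => -((i : ℕ) : R)) with hW
  have hM : (Matrix.of fun i j : Fin (n + 1) => Q.eval (-((i : ℕ) : R) + ((j : ℕ) : R)))
      = W * H * V.transpose := by
    ext i j
    rw [Matrix.of_apply, eval_add_expand n Q hQ, Matrix.mul_assoc, Matrix.mul_apply,
      ← Equiv.sum_comp Fin.revPerm]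
    refine Finset.sum_congr rfl fun m _ => ?_
    rw [Matrix.mul_apply, Finset.mul_sum]
    refine Finset.sum_congr rfl fun k _ => ?_
    simp only [hW, hH, hV, Matrix.projVandermonde_apply, Matrix.of_apply, Matrix.transpose_apply,
      Matrix.vandermonde_apply, Fin.revPerm_apply]
    ring
  have hVd : V.det = (n.superFactorial : R) := Matrix.det_vandermonde_id_eq_superFactorial n
  have hWd : W.det = (n.superFactorial : R) := by
    rw [← hVd, hW, hV, Matrix.det_projVandermonde, Matrix.det_vandermonde]
    refine Finset.prod_congr rfl fun i _ => Finset.prod_congr rfl fun j _ => ?_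
    ring
  have hHd : H.det = ((∏ i : Fin (n + 1), (n.choose i) : ℕ) : R) * Q.coeff n ^ (n + 1) := by
    rw [Matrix.det_of_lowerTriangular]
    · rw [← Equiv.prod_comp Fin.revPerm]
      have : ∀ i : Fin (n + 1), H (Fin.revPerm i) (Fin.revPerm i)
          = (n.choose i : R) * Q.coeff n := by
        intro i
        have : ((i.rev : Fin (n + 1)) : ℕ) + i = n := by
          rw [Fin.val_rev]; omega
        simp only [hH, Matrix.of_apply, Fin.revPerm_apply, Fin.rev_rev, this]
      rw [Finset.prod_congr rfl fun i _ => this i, Finset.prod_mul_distrib]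
      simp
    · intro i j hij
      have hij : i < j := hij
      have : Q.natDegree < (j : ℕ) + i.rev := by
        rw [Fin.val_rev]
        have : (i : ℕ) < j := hij
        omega
      simp only [hH, Matrix.of_apply, coeff_eq_zero_of_natDegree_lt this, mul_zero]
  rw [hM, Matrix.det_mul, Matrix.det_mul, Matrix.det_transpose, hVd, hWd, hHd]
  have := congrArg (Nat.cast : ℕ → R) (sf_arith n)
  push_cast at this ⊢
  rw [← this]
  ring



/-- For a monic polynomial `p` of degree `ℓ ≥ 1` over a field of characteristic zero, the
`(ℓ+1) × (ℓ+1)` Toeplitz determinant `det (p(x - i + j))_{0 ≤ i,j ≤ ℓ}`, as a polynomial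
in `x`, equals the constant `(ℓ!)^(ℓ+1)`, independent of `p`. -/
theorem toeplitz_det_of_monic_is_factorial_power
    {K : Type*} [Field K] [CharZero K]
    (ℓ : ℕ) (hℓ : 1 ≤ ℓ) (p : Polynomial K) (hp : p.Monic) (hdeg : p.natDegree = ℓ) :
    Matrix.det (Matrix.of fun i j : Fin (ℓ + 1) =>
        p.comp (X + C ((j : ℕ) : K) - C ((i : ℕ) : K))) =
      C ((ℓ.factorial : K) ^ (ℓ + 1)) := by
  have hd : (taylor X (p.map C)).natDegree = ℓ := by
    rw [natDegree_taylor, natDegree_map, hdeg]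
  have h := det_eval_sub ℓ (taylor (X : K[X]) (p.map C)) hd.le
  have hc : (taylor (X : K[X]) (p.map C)).coeff ℓ = 1 := by
    have : (taylor (X : K[X]) (p.map C)).leadingCoeff = 1 := by
      rw [leadingCoeff_taylor, (hp.map C).leadingCoeff]
    rwa [leadingCoeff, hd] at this
  rw [hc] at h
  have hE : (Matrix.of fun i j : Fin (ℓ + 1) =>
        p.comp (X + C ((j : ℕ) : K) - C ((i : ℕ) : K))) = (Matrix.of fun i j : Fin (ℓ + 1) =>
        (taylor (X : K[X]) (p.map C)).eval (-((i : ℕ) : K[X]) + ((j : ℕ) : K[X]))) := by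
    ext1 i j
    simp only [Matrix.of_apply]
    rw [taylor_eval, eval_map, comp]
    congr 1
    simp only [map_natCast]
    ring
  rw [hE, h]
  simp
end

section
/- Let K be an algebraically closed field of characteristic zero, let c_1, …, c_t and μ_1, …, μ_t be nonzero elements of K with the μ_i distinct, and let a ∈ S be the sequence a = ∑_{i=1}^t c_i e(μ_i). Let Q ⊆ K^* be the multiplicative submonoid generated by μ_1, …, μ_t. Then the K-algebra homomorphism from the monoid algebra K[Q] to S sending the basis element [μ] to the exponential sequence e(μ) is injective, and its image equals the K-subalgebra R = K[a, Ea, E²a, …] of S generated by a and all its shifts E^j a. In particular R is isomorphic as a K-algebra to K[Q]. -/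
/-- Let `S = ℕ → K` be the `K`-algebra of sequences `(a_1, a_2, …)` (position `n`
records the term `a_{n+1}`), let `a` be the sequence `a_n = ∑ c i * μ i ^ n` with
nonzero `c i` and distinct nonzero `μ i`, and let `Q ⊆ K` be the multiplicative
submonoid generated by the `μ i`.  Then the `K`-algebra homomorphism
`Φ : K[Q] → S` sending the basis element `[q]` to the exponential sequence `e(q)`
is injective, and its image is the subalgebra `R = K[a, Ea, E²a, …]` generated by
`a` and its shifts. -/
theorem monoid_algebra_iso_shift_algebra_simple
    {K : Type*} [Field K] [IsAlgClosed K] [CharZero K]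
    (t : ℕ) (c μ : Fin t → K) (hc : ∀ i, c i ≠ 0) (hμ0 : ∀ i, μ i ≠ 0)
    (hμ : Function.Injective μ)
    (a : ℕ → K) (ha : a = fun n => ∑ i, c i * μ i ^ (n + 1))
    (Q : Submonoid K) (hQ : Q = Submonoid.closure (Set.range μ))
    (Φ : MonoidAlgebra K ↥Q →ₐ[K] (ℕ → K))
    (hΦ : ∀ q : ↥Q, Φ (MonoidAlgebra.of K ↥Q q) = fun n => (q : K) ^ (n + 1)) :
    Function.Injective Φ ∧
      Φ.range = Algebra.adjoin K (Set.range fun j : ℕ => fun n => a (n + j)) := by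
  have hQ0 : ∀ q ∈ Q, q ≠ 0 := by
    intro q hq
    have hle : Q ≤ nonZeroDivisors K := by
      rw [hQ, Submonoid.closure_le]
      rintro _ ⟨i, rfl⟩
      exact mem_nonZeroDivisors_of_ne_zero (hμ0 i)
    exact nonZeroDivisors.ne_zero (hle hq)
  have hli : LinearIndependent K (fun (q : ↥Q) (n : ℕ) => (q : K) ^ (n + 1)) := by
    have h1 := linearIndependent_monoidHom (Multiplicative ℕ) K
    have hinj : Function.Injective (fun q : ↥Q => powersHom K (q : K)) := by
      intro q r h
      exact Subtype.ext ((powersHom K).injective h)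
    have h2 := h1.comp _ hinj
    have h3 := h2.units_smul (fun q : ↥Q => Units.mk0 (q : K) (hQ0 _ q.2))
    have h4 : LinearIndependent K (fun (q : ↥Q) (n : Multiplicative ℕ) =>
        (q : K) ^ (Multiplicative.toAdd n + 1)) := by
      convert h3 using 1
      funext q n
      change (q : K) ^ (Multiplicative.toAdd n + 1) = (q : K) * (q : K) ^ (Multiplicative.toAdd n)
      rw [pow_succ']
      rfl
    exact h4
  refine ⟨?_, ?_⟩
  · rw [injective_iff_map_eq_zero]
    intro f hf
    have key : ∀ f : MonoidAlgebra K ↥Q, Φ f =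
        Finsupp.linearCombination K (fun (q : ↥Q) (n : ℕ) => (q : K) ^ (n + 1))
          (MonoidAlgebra.coeff f) := by
      intro f
      induction f using MonoidAlgebra.induction_on with
      | of q => rw [hΦ]; simp [MonoidAlgebra.of]
      | add f g hf hg => rw [map_add, hf, hg]; simp
      | smul r f hf => rw [map_smul, hf]; simp
    rw [key] at hf
    have h := (linearIndependent_iff.1 hli) _ hf
    simpa using h
  · have hmem : ∀ i, μ i ∈ Q := fun i => hQ ▸ Submonoid.subset_closure ⟨i, rfl⟩
    apply le_antisymm
    · have hgen : ∀ i, (fun n : ℕ => μ i ^ (n + 1)) ∈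
          Algebra.adjoin K (Set.range fun j : ℕ => fun n => a (n + j)) := by
        intro i
        let p : Polynomial K := Lagrange.basis Finset.univ μ i
        have hp : (fun n : ℕ => μ i ^ (n + 1)) =
            (c i)⁻¹ • ∑ j ∈ Finset.range (p.natDegree + 1),
              p.coeff j • (fun n : ℕ => a (n + j)) := by
          funext n
          have e1 : ∑ j ∈ Finset.range (p.natDegree + 1), p.coeff j * a (n + j)
              = ∑ k, c k * μ k ^ (n + 1) * p.eval (μ k) := by
            simp only [ha, Polynomial.eval_eq_sum_range, Finset.mul_sum]
            rw [Finset.sum_comm]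
            refine Finset.sum_congr rfl fun k _ => Finset.sum_congr rfl fun j _ => ?_
            ring
          have e2 : ∑ k, c k * μ k ^ (n + 1) * p.eval (μ k) = c i * μ i ^ (n + 1) := by
            rw [Finset.sum_eq_single i]
            · rw [Lagrange.eval_basis_self (hμ.injOn) (Finset.mem_univ i), mul_one]
            · intro k _ hk
              rw [Lagrange.eval_basis_of_ne hk.symm (Finset.mem_univ k), mul_zero]
            · simp
          simp only [Pi.smul_apply, Finset.sum_apply, smul_eq_mul]
          rw [e1, e2, inv_mul_cancel_left₀ (hc i)]
        rw [hp]
        refine Subalgebra.smul_mem _ (Subalgebra.sum_mem _ fun j _ => ?_) _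
        have hj : (fun n : ℕ => a (n + j)) ∈
            Algebra.adjoin K (Set.range fun j : ℕ => fun n => a (n + j)) :=
          Algebra.subset_adjoin (Set.mem_range_self j)
        exact Subalgebra.smul_mem _ hj _
      have hall : ∀ q ∈ Q, (fun n : ℕ => q ^ (n + 1)) ∈
          Algebra.adjoin K (Set.range fun j : ℕ => fun n => a (n + j)) := by
        intro q hq
        rw [hQ] at hq
        induction hq using Submonoid.closure_induction with
        | mem x hx => obtain ⟨i, rfl⟩ := hx; exact hgen i
        | one => 
          have h1 : (fun n : ℕ => (1 : K) ^ (n + 1)) = 1 := by funext n; simp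
          rw [h1]
          exact Subalgebra.one_mem _
        | mul x y _ _ hx hy =>
          have := Subalgebra.mul_mem _ hx hy
          convert this using 1
          funext n
          simp [mul_pow]
      rintro _ ⟨f, rfl⟩
      change Φ f ∈ _
      induction f using MonoidAlgebra.induction_on with
      | of q => rw [hΦ]; exact hall _ q.2
      | add f g hf hg => rw [map_add]; exact Subalgebra.add_mem _ hf hg
      | smul r f hf => rw [map_smul]; exact Subalgebra.smul_mem _ hf _
    · rw [Algebra.adjoin_le_iff]
      rintro _ ⟨j, rfl⟩
      refine ⟨∑ i, (c i * μ i ^ j) • MonoidAlgebra.of K ↥Q ⟨μ i, hmem i⟩, ?_⟩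
      change Φ _ = _
      rw [map_sum]
      simp only [map_smul, hΦ]
      funext n
      simp only [ha, Pi.smul_apply, Finset.sum_apply, smul_eq_mul]
      refine Finset.sum_congr rfl fun k _ => ?_
      ring
end

section
/- Let K be an algebraically closed field of characteristic zero, let A be a finitely generated abelian group (written multiplicatively) with a fixed set of generators q_1, …, q_ℓ, and let Q ⊆ A be the submonoid generated by q_1, …, q_ℓ. Then the following three quantities are equal: (1) the rank of A, i.e. dim_ℚ(ℚ ⊗_ℤ A); (2) the Krull dimension of the monoid algebra K[Q]; (3) the maximum cardinality of a subset of K[Q] that is algebraically independent over K. -/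
open scoped TensorProduct

/-- The Krull dimension is invariant under injective integral extensions. -/
theorem aux_krullDim_integral {R S : Type*} [CommRing R] [CommRing S] (f : R →+* S)
    (hf : Function.Injective f) (hint : f.IsIntegral) : ringKrullDim S = ringKrullDim R := by
  algebraize [f]
  have hs : Function.Surjective (PrimeSpectrum.comap f) := hint.comap_surjective hf
  apply le_antisymm
  · apply Order.krullDim_le_of_strictMono (PrimeSpectrum.comap f)
    intro I J h
    exact Ideal.IsIntegral.comap_lt_comap (R := R) (I := I.asIdeal) (J := J.asIdeal) h
  · unfold ringKrullDim
    refine iSup_le fun l => ?_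
    obtain ⟨P, hP⟩ := hs l.head
    have : P.asIdeal.LiesOver (RelSeries.head l).asIdeal := ⟨by rw [← hP]; rfl⟩
    obtain ⟨L, hL, -⟩ := Ideal.exists_ltSeries_of_hasGoingUp l P.asIdeal
    rw [← hL]
    exact le_iSup (fun p : LTSeries (PrimeSpectrum S) => (p.length : WithBot ℕ∞)) L

/-- Algebraically independent elements stay so in some domain quotient. -/
theorem aux_exists_prime {K R ι : Type*} [Field K] [CommRing R] [Algebra K R] (v : ι → R)
    (hv : AlgebraicIndependent K v) : ∃ P : Ideal R, P.IsPrime ∧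
      AlgebraicIndependent K (fun i => Ideal.Quotient.mkₐ K P (v i)) := by
  rw [algebraicIndependent_iff_injective_aeval] at hv
  set M : Submonoid R := (nonZeroDivisors (MvPolynomial ι K)).map (MvPolynomial.aeval v : _ →ₐ[K] R)
  have hd : Disjoint ((⊥ : Ideal R) : Set R) M := by
    rw [Set.disjoint_left]
    rintro x hx ⟨p, hp, rfl⟩
    have h0 : (MvPolynomial.aeval v : MvPolynomial ι K →ₐ[K] R) p = 0 := hx
    exact nonZeroDivisors.ne_zero hp (hv (by simpa using h0))
  obtain ⟨P, hP, -, hPd⟩ := Ideal.exists_le_prime_disjoint _ M hd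
  refine ⟨P, hP, ?_⟩
  rw [algebraicIndependent_iff]
  intro p hp
  by_contra hne
  have h1 : Ideal.Quotient.mkₐ K P (MvPolynomial.aeval v p) = 0 := by
    rw [← hp]
    exact MvPolynomial.comp_aeval_apply (φ := Ideal.Quotient.mkₐ K P) v p
  have h2 : MvPolynomial.aeval v p ∈ P := Ideal.Quotient.eq_zero_iff_mem.mp h1
  exact Set.disjoint_left.mp hPd h2 ⟨p, mem_nonZeroDivisors_of_ne_zero hne, rfl⟩

theorem aux_le_of_integral {K R : Type*} [Field K] [CommRing R] [Algebra K R] {s n : ℕ}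
    (g : MvPolynomial (Fin s) K →ₐ[K] R) (hg : g.IsIntegral) (v : Fin n → R)
    (hv : AlgebraicIndependent K v) : n ≤ s := by
  obtain ⟨P, hP, hv'⟩ := aux_exists_prime v hv
  let g' := (Ideal.Quotient.mkₐ K P).comp g
  have hg' : g'.toRingHom.IsIntegral := 
    RingHom.IsIntegral.trans g.toRingHom (Ideal.Quotient.mk P) hg
      (RingHom.isIntegral_of_surjective _ Ideal.Quotient.mk_surjective)
  have hr : Algebra.adjoin K (Set.range fun i => g' (MvPolynomial.X i)) = g'.range := by
    rw [← Algebra.map_top, ← MvPolynomial.adjoin_range_X, AlgHom.map_adjoin, ← Set.range_comp]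
    rfl
  have : Algebra.IsIntegral (Algebra.adjoin K (Set.range fun i => g' (MvPolynomial.X i))) (R ⧸ P) := by
    rw [hr]
    constructor
    intro x
    obtain ⟨p, hp, h⟩ := hg' x
    refine ⟨p.map g'.rangeRestrict.toRingHom, hp.map _, ?_⟩
    rw [Polynomial.eval₂_map]
    exact h
  have h1 := Algebra.IsAlgebraic.trdeg_le_cardinalMk K (Set.range fun i => g' (MvPolynomial.X i))
  have h2 := hv'.lift_cardinalMk_le_trdeg
  have h3 := Cardinal.mk_range_le_lift (f := fun i : Fin s => g' (MvPolynomial.X i))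
  have h4 := h2.trans (Cardinal.lift_le.mpr h1)
  simp at h3 h4
  exact_mod_cast h4.trans h3

theorem aux_algIndep {K A ι : Type*} [Field K] [CommGroup A] (Q : Submonoid A) (v : ι → Q)
    (hv : LinearIndependent ℤ (fun i => Additive.ofMul (v i : A))) :
    AlgebraicIndependent K (fun i => MonoidAlgebra.of K Q (v i)) := by
  classical
  have hv' : LinearIndependent ℕ (fun i => Additive.ofMul (v i : A)) := hv.restrict_scalars' ℕ
  let m : (ι →₀ ℕ) → Q := fun d => d.prod fun i k => v i ^ k
  have hm : Function.Injective m := by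
    intro d e hde
    apply hv'
    have h : ((m d : Q) : A) = m e := by rw [hde]
    simp only [m, Finsupp.prod, SubmonoidClass.coe_finsetProd, SubmonoidClass.coe_pow] at h
    have h' := congrArg Additive.ofMul h
    simpa [Finsupp.linearCombination_apply, Finsupp.sum, ofMul_prod, ofMul_pow] using h'
  rw [algebraicIndependent_iff]
  intro p hp
  have key : MvPolynomial.aeval (fun i => MonoidAlgebra.of K Q (v i)) p
      = ∑ d ∈ p.support, MonoidAlgebra.single (m d) (p.coeff d) := by
    rw [MvPolynomial.aeval_def, MvPolynomial.eval₂_eq]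
    refine Finset.sum_congr rfl fun d _ => ?_
    have : (∏ i ∈ d.support, MonoidAlgebra.of K Q (v i) ^ d i) = MonoidAlgebra.of K Q (m d) := by
      simp only [m, Finsupp.prod, map_prod, map_pow]
    rw [this]
    simp [MonoidAlgebra.of_apply, MonoidAlgebra.single_mul_single]
  rw [hp] at key
  ext d
  have h2 := congrArg (fun x : MonoidAlgebra K Q => x.coeff (m d)) key
  simp only [MonoidAlgebra.coeff_sum, MonoidAlgebra.coeff_single, MonoidAlgebra.coeff_zero,
    Finsupp.finsetSum_apply, Finsupp.single_apply, hm.eq_iff] at h2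
  simp at h2
  by_contra hne
  exact hne (h2 hne).symm

theorem aux_linIndep {K A D ι : Type*} [Finite ι] [Field K] [CommGroup A] (Q : Submonoid A)
    (v : ι → Q) [CommRing D] [Algebra K D] (f : MonoidAlgebra K Q →ₐ[K] D)
    (hv : AlgebraicIndependent K (fun i => f (MonoidAlgebra.of K Q (v i)))) :
    LinearIndependent ℤ (fun i => Additive.ofMul (v i : A)) := by
  classical
  have := Fintype.ofFinite ι
  rw [Fintype.linearIndependent_iff]
  intro g hg
  have h1 : (∏ i, v i ^ (g i).toNat) = ∏ i, v i ^ (-g i).toNat := by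
    apply Subtype.ext
    apply Additive.ofMul.injective
    simp only [SubmonoidClass.coe_finsetProd, SubmonoidClass.coe_pow, ofMul_prod, ofMul_pow]
    rw [← sub_eq_zero, ← Finset.sum_sub_distrib, ← hg]
    refine Finset.sum_congr rfl fun i _ => ?_
    rw [← natCast_zsmul, ← natCast_zsmul, sub_eq_add_neg, ← sub_zsmul]
    congr 1
    omega
  have h2 : (∏ i, (MvPolynomial.X i : MvPolynomial ι K) ^ (g i).toNat)
      = ∏ i, MvPolynomial.X i ^ (-g i).toNat := by
    apply (algebraicIndependent_iff_injective_aeval.mp hv)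
    simp only [map_prod, map_pow, MvPolynomial.aeval_X]
    simp only [← map_prod, ← map_pow, h1]
  intro i
  have h3 : ∀ a : ι → ℕ, (∏ i, (MvPolynomial.X i : MvPolynomial ι K) ^ a i)
      = MvPolynomial.monomial (Finsupp.equivFunOnFinite.symm a) 1 := by
    intro a
    rw [MvPolynomial.monomial_eq, Finsupp.prod_fintype _ _ (by simp)]
    simp
  rw [h3, h3] at h2
  have h4 := MvPolynomial.monomial_left_injective one_ne_zero h2
  have h5 := DFunLike.congr_fun h4 i
  simp at h5
  omega

theorem aux_exists_basis {K D : Type*} [Field K] [CommRing D] [IsDomain D] [Algebra K D]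
    {s : Set D} (htop : Algebra.adjoin K s = ⊤) :
    ∃ t, t ⊆ s ∧ IsTranscendenceBasis K ((↑) : t → D) := by
  have hint : Algebra.IsIntegral (Algebra.adjoin K s) D := by
    rw [htop]
    exact ⟨fun x => isIntegral_algebraMap (R := (⊤ : Subalgebra K D)) (x := ⟨x, trivial⟩)⟩
  exact exists_isTranscendenceBasis_subset s

theorem aux_le_rank {K A : Type*} [Field K] [CommGroup A] (ℓ : ℕ) (q : Fin ℓ → A)
    (hgen : Subgroup.closure (Set.range q) = ⊤)
    (Q : Submonoid A) (hQ : Q = Submonoid.closure (Set.range q)) (n : ℕ)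
    (v : Fin n → MonoidAlgebra K Q) (hv : AlgebraicIndependent K v) :
    n ≤ Module.finrank ℚ (ℚ ⊗[ℤ] Additive A) := by
  obtain ⟨P, hP, hv'⟩ := aux_exists_prime v hv
  let f := Ideal.Quotient.mkₐ K P
  let q' : Fin ℓ → Q := fun i => ⟨q i, hQ ▸ Submonoid.subset_closure ⟨i, rfl⟩⟩
  have hq' : Submonoid.closure (Set.range q') = ⊤ := by
    apply Submonoid.map_injective_of_injective (f := Q.subtype) Subtype.val_injective
    rw [MonoidHom.map_mclosure, ← Set.range_comp, ← MonoidHom.mrange_eq_map, Submonoid.mrange_subtype]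
    exact hQ.symm
  have htop : Algebra.adjoin K (Set.range fun i => f (MonoidAlgebra.of K Q (q' i))) = ⊤ := by
    have h1 : Algebra.adjoin K (Set.range fun i => MonoidAlgebra.of K Q (q' i)) = ⊤ := by
      have := MonoidAlgebra.mvPolynomial_aeval_of_surjective_of_closure (R := K) hq'
      have h := (AlgHom.range_eq_top _).mpr this
      rw [← Algebra.adjoin_range_eq_range_aeval] at h
      rw [← h]
      congr 1
      ext x
      simp
    have h2 := congrArg (Subalgebra.map f) h1
    rw [AlgHom.map_adjoin, ← Set.range_comp, Algebra.map_top,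
      (AlgHom.range_eq_top f).mpr (Ideal.Quotient.mkₐ_surjective K P)] at h2
    exact h2
  obtain ⟨t, ht, hb⟩ := aux_exists_basis htop
  choose i hi using fun x : t => ht x.2
  have hfin : Finite t := (Set.finite_range _).subset ht
  have hli : LinearIndependent ℤ (fun x => Additive.ofMul (q' (i x) : A)) := by
    apply aux_linIndep (K := K) Q (fun x => q' (i x)) f
    convert! hb.1 using 1
    funext x
    exact hi x
  have hfA : Module.Finite ℤ (Additive A) := by
    have : AddGroup.FG (Additive A) := by
      have : Group.FG A := Group.fg_iff.mpr ⟨_, hgen, Set.finite_range q⟩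
      infer_instance
    exact Module.Finite.iff_addGroup_fg.mpr this
  have hloc : IsLocalizedModule (nonZeroDivisors ℤ) (TensorProduct.mk ℤ ℚ (Additive A) 1) :=
    (isLocalizedModule_iff_isBaseChange (nonZeroDivisors ℤ) ℚ _).mpr
      (TensorProduct.isBaseChange ℤ (Additive A) ℚ)
  have h1 := hli.of_isLocalizedModule ℚ (nonZeroDivisors ℤ) (TensorProduct.mk ℤ ℚ (Additive A) 1)
  have := Fintype.ofFinite t
  have h2 := h1.fintype_card_le_finrank
  have h3 := hv'.lift_cardinalMk_le_trdeg
  rw [← hb.cardinalMk_eq_trdeg] at h3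
  rw [Cardinal.mk_fintype t] at h3
  simp only [Cardinal.mk_fin, Cardinal.lift_natCast, Nat.cast_le] at h3
  omega

theorem aux_exists {K A : Type*} [Field K] [CommGroup A] (ℓ : ℕ) (q : Fin ℓ → A)
    (hgen : Subgroup.closure (Set.range q) = ⊤)
    (Q : Submonoid A) (hQ : Q = Submonoid.closure (Set.range q)) :
    ∃ v : Fin (Module.finrank ℚ (ℚ ⊗[ℤ] Additive A)) → MonoidAlgebra K Q,
      AlgebraicIndependent K v := by
  let j : Additive A →ₗ[ℤ] ℚ ⊗[ℤ] Additive A := TensorProduct.mk ℤ ℚ _ 1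
  let w : Fin ℓ → ℚ ⊗[ℤ] Additive A := fun i => j (Additive.ofMul (q i))
  have hspan : Submodule.span ℚ (Set.range w) = ⊤ := by
    have h1 : Submodule.span ℤ (Set.range fun i => Additive.ofMul (q i)) = ⊤ := by
      rw [← Submodule.toAddSubgroup_inj, ← AddSubgroup.toIntSubmodule_closure]
      have h := congrArg Subgroup.toAddSubgroup hgen
      rw [Subgroup.toAddSubgroup_closure] at h
      exact h
    have h2 := congrArg (Submodule.baseChange ℚ) h1
    rw [Submodule.baseChange_span, ← Set.range_comp, Submodule.baseChange_top] at h2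
    exact h2
  obtain ⟨κ, a, ha, hsp, hli⟩ := exists_linearIndependent' ℚ w
  have hfin : Finite κ := Finite.of_injective a ha
  have := Fintype.ofFinite κ
  let b := Module.Basis.mk hli (by rw [hsp, hspan])
  have hc : Module.finrank ℚ (ℚ ⊗[ℤ] Additive A) = Fintype.card κ := Module.finrank_eq_card_basis b
  rw [hc]
  let e := (Fintype.equivFin κ).symm
  have hl : LinearIndependent ℤ (fun k => Additive.ofMul (q (a k))) :=
    LinearIndependent.of_comp j (hli.restrict_scalars' ℤ)
  have := aux_algIndep (K := K) Q
    (fun k => ⟨q (a k), hQ ▸ Submonoid.subset_closure ⟨_, rfl⟩⟩) hl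
  exact ⟨_, this.comp e e.injective⟩

/-- For a finitely generated abelian group `A` with generators `q 1, …, q ℓ` and `Q ⊆ A`
the submonoid they generate, the following are equal: the rank of `A`
(`dim_ℚ (ℚ ⊗_ℤ A)`), the Krull dimension of the monoid algebra `K[Q]`, and the maximum
number of elements of `K[Q]` algebraically independent over `K`. -/
theorem rank_eq_krullDim_eq_max_algebraically_independent
    {K : Type*} [Field K] [IsAlgClosed K] [CharZero K]
    (A : Type*) [CommGroup A] (ℓ : ℕ) (q : Fin ℓ → A)
    (hgen : Subgroup.closure (Set.range q) = ⊤)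
    (Q : Submonoid A) (hQ : Q = Submonoid.closure (Set.range q))
    (r : ℕ) (hr : r = Module.finrank ℚ (ℚ ⊗[ℤ] Additive A)) :
    ringKrullDim (MonoidAlgebra K ↥Q) = (r : WithBot (WithTop ℕ)) ∧
      (∃ v : Fin r → MonoidAlgebra K ↥Q, AlgebraicIndependent K v) ∧
      ∀ n : ℕ, (∃ v : Fin n → MonoidAlgebra K ↥Q, AlgebraicIndependent K v) → n ≤ r := by
  subst hr
  obtain ⟨v, hv⟩ := aux_exists (K := K) ℓ q hgen Q hQ
  refine ⟨?_, ⟨v, hv⟩, fun n ⟨w, hw⟩ => aux_le_rank ℓ q hgen Q hQ n w hw⟩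
  have hfg : Monoid.FG Q := by
    rw [Monoid.fg_iff_submonoid_fg, hQ]
    exact (Submonoid.fg_iff _).mpr ⟨_, rfl, Set.finite_range q⟩
  obtain ⟨s, g, hinj, hint⟩ := exists_integral_inj_algHom_of_fg K (MonoidAlgebra K Q)
  have h1 := aux_le_of_integral g hint v hv
  have hX : AlgebraicIndependent K (fun i => g (MvPolynomial.X i)) := by
    rw [algebraicIndependent_iff_injective_aeval]
    convert! hinj using 2
    apply MvPolynomial.algHom_ext
    simp
  have h2 := aux_le_rank ℓ q hgen Q hQ s _ hX
  have h3 := le_antisymm h1 h2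
  rw [aux_krullDim_integral g.toRingHom hinj hint, MvPolynomial.ringKrullDim_of_isNoetherianRing,
    ringKrullDim_eq_zero_of_field, h3]
  simp
  rfl
end

section
/- Let K be a field of characteristic zero and let S be the K-algebra of sequences with values in K. Let R' ⊆ S be the K-subalgebra generated by the exponential sequences e(μ) for all μ ∈ K^*. Then the sequence δ ∈ S given by δ_n = n is transcendental over R'; that is, there is no relation ρ_0 δ^m + ρ_1 δ^{m−1} + ⋯ + ρ_m = 0 with m ≥ 1, coefficients ρ_j ∈ R', and ρ_0 ≠ 0. -/
open Polynomial in
/-- The shift operator on sequences. -/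
def seqShift (K : Type*) [Field K] : Module.End K (ℕ → K) :=
  LinearMap.funLeft K K Nat.succ

open Polynomial in
/-- The polynomial-exponential sequence `P(n) ξ^n`, `n ≥ 1`. -/
def polyExp {K : Type*} [Field K] (ξ : K) (P : K[X]) : ℕ → K :=
  fun n => P.eval ((n : K) + 1) * ξ ^ (n + 1)

open Polynomial in
theorem polyExp_step {K : Type*} [Field K] (ξ : K) (P : K[X]) :
    (seqShift K - ξ • (1 : Module.End K (ℕ → K))) (polyExp ξ P) =
      ξ • polyExp ξ (taylor 1 P - P) := by
  funext n
  simp only [seqShift, polyExp, LinearMap.sub_apply, LinearMap.smul_apply, Module.End.one_apply,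
    Pi.sub_apply, Pi.smul_apply, LinearMap.funLeft_apply, eval_sub, taylor_eval, smul_eq_mul,
    Nat.succ_eq_add_one, Nat.cast_add, Nat.cast_one]
  ring

open Polynomial in
theorem polyExp_killed {K : Type*} [Field K] (ξ : K) (d : ℕ) :
    ∀ P : K[X], P.degree < d →
      ((seqShift K - ξ • (1 : Module.End K (ℕ → K))) ^ d) (polyExp ξ P) = 0 := by
  induction d with
  | zero =>
    intro P hP
    have : P = 0 := by
      rw [← degree_eq_bot]
      simpa using hP
    subst this
    funext n
    simp [polyExp]
  | succ d ih =>
    intro P hP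
    rw [pow_succ, Module.End.mul_apply, polyExp_step, map_smul, ih, smul_zero]
    by_cases h0 : P = 0
    · subst h0
      simp
    · have h1 : (taylor 1 P - P).degree < P.degree := by
        have := degree_sub_lt (p := taylor 1 P) (q := P) (degree_taylor P 1)
          (by simpa using h0) (leadingCoeff_taylor (1 : K) P)
        rwa [degree_taylor] at this
      rw [degree_eq_natDegree h0] at h1 hP
      refine h1.trans_le ?_
      have : P.natDegree < d + 1 := by exact_mod_cast hP
      exact_mod_cast Nat.lt_succ_iff.mp this

open Polynomial in
theorem polyExp_mem {K : Type*} [Field K] (ξ : K) (P : K[X]) :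
    polyExp ξ P ∈ (seqShift K).maxGenEigenspace ξ := by
  rw [Module.End.mem_maxGenEigenspace]
  exact ⟨P.natDegree + 1, polyExp_killed ξ _ P
    (degree_le_natDegree.trans_lt (by exact_mod_cast Nat.lt_succ_self _))⟩

open Polynomial in
theorem polyExp_eq_zero {K : Type*} [Field K] [CharZero K] (ξ : K) (hξ : ξ ≠ 0) (P : K[X])
    (h : polyExp ξ P = 0) : P = 0 := by
  apply Polynomial.eq_zero_of_infinite_isRoot
  refine Set.Infinite.mono (s := Set.range fun n : ℕ => (n : K) + 1) ?_ ?_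
  · rintro _ ⟨n, rfl⟩
    have := congrFun h n
    simpa [polyExp, hξ] using this
  · apply Set.infinite_range_of_injective
    intro a b hab
    simpa using hab

theorem mem_expAlg {K : Type*} [Field K] (r : ℕ → K)
    (hr : r ∈ Algebra.adjoin K {s : ℕ → K | ∃ ξ : K, ξ ≠ 0 ∧ s = fun n => ξ ^ (n + 1)}) :
    ∃ c : Kˣ →₀ K, ∀ n, r n = c.sum fun ξ a => a * (ξ : K) ^ (n + 1) := by
  have h1 : r ∈ Submodule.span K (Set.range fun (ξ : Kˣ) (n : ℕ) => (ξ : K) ^ (n + 1)) := by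
    have h2 : r ∈ Subalgebra.toSubmodule (Algebra.adjoin K
      {s : ℕ → K | ∃ ξ : K, ξ ≠ 0 ∧ s = fun n => ξ ^ (n + 1)}) := hr
    rw [Algebra.adjoin_eq_span] at h2
    refine Submodule.span_mono ?_ h2
    intro s hs
    induction hs using Submonoid.closure_induction with
    | mem x hx =>
      obtain ⟨ξ, hξ, rfl⟩ := hx
      exact ⟨Units.mk0 ξ hξ, rfl⟩
    | one => exact ⟨1, by funext n; simp⟩
    | mul x y _ _ hx hy =>
      obtain ⟨a, rfl⟩ := hx
      obtain ⟨b, rfl⟩ := hy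
      exact ⟨a * b, by funext n; simp [mul_pow]⟩
  obtain ⟨c, hc⟩ := Finsupp.mem_span_range_iff_exists_finsupp.mp h1
  refine ⟨c, fun n => ?_⟩
  rw [← hc]
  simp [Finsupp.sum, Finset.sum_apply]


/-- In the `K`-algebra `S = ℕ → K` of sequences `(a_1, a_2, …)` (position `n` records
the term `a_{n+1}`), over a field `K` of characteristic zero, the sequence `δ` with
`δ_n = n` is transcendental over the subalgebra `R'` generated by all exponential
sequences `e(ξ)`, `ξ ∈ K^*`. -/
theorem delta_transcendental_over_exponentials
    {K : Type*} [Field K] [CharZero K]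
    (R' : Subalgebra K (ℕ → K))
    (hR' : R' = Algebra.adjoin K
      {s : ℕ → K | ∃ ξ : K, ξ ≠ 0 ∧ s = fun n => ξ ^ (n + 1)}) :
    Transcendental ↥R' (fun n : ℕ => ((n : K) + 1)) := by
  classical
  rintro ⟨p, hp0, hp⟩
  apply hp0
  subst hR'
  have key := fun j : ℕ => mem_expAlg _ (p.coeff j).2
  choose c hc using key
  let S : Finset Kˣ := p.support.biUnion fun j => (c j).support
  let P : Kˣ → Polynomial K := fun ξ => ∑ j ∈ p.support, Polynomial.monomial j (c j ξ)
  have hind : iSupIndep fun ξ : Kˣ => (seqShift K).maxGenEigenspace (ξ : K) :=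
    (seqShift K).independent_maxGenEigenspace.comp Units.val_injective
  rw [iSupIndep_iff_finsetSum_eq_zero_imp_eq_zero] at hind
  have hsum : ∑ ξ ∈ S, polyExp (ξ : K) (P ξ) = 0 := by
    rw [← hp, Polynomial.aeval_eq_sum_range' (Nat.lt_succ_self _)]
    rw [← Polynomial.aeval_eq_sum_range' (Nat.lt_succ_self _), Polynomial.aeval_def,
      Polynomial.eval₂_eq_sum, Polynomial.sum]
    funext n
    simp only [Finset.sum_apply, Pi.mul_apply, Pi.pow_apply]
    have h1 : ∀ j ∈ p.support, (algebraMap _ (ℕ → K) (p.coeff j)) n * ((n : K) + 1) ^ j =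
        ∑ ξ ∈ S, c j ξ * ((n : K) + 1) ^ j * (ξ : K) ^ (n + 1) := by
      intro j hj
      have : (algebraMap _ (ℕ → K) (p.coeff j)) n = (p.coeff j : ℕ → K) n := rfl
      rw [this, hc j n, Finsupp.sum_of_support_subset (s := S) _
        (Finset.subset_biUnion_of_mem (fun j => (c j).support) hj) _ (by simp), Finset.sum_mul]
      exact Finset.sum_congr rfl fun ξ _ => by ring
    rw [Finset.sum_congr rfl h1, Finset.sum_comm]
    refine Finset.sum_congr rfl fun ξ _ => ?_
    simp [polyExp, P, Polynomial.eval_finsetSum, Finset.sum_mul]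
  have hz := hind S _ (fun ξ _ => polyExp_mem (ξ : K) (P ξ)) hsum
  ext j : 1
  by_cases hj : j ∈ p.support
  · apply Subtype.ext
    funext n
    rw [hc j n]
    refine Finset.sum_eq_zero fun ξ hξ => ?_
    have hP : P ξ = 0 := polyExp_eq_zero (ξ : K) ξ.ne_zero _
      (hz ξ (Finset.mem_biUnion.mpr ⟨j, hj, hξ⟩))
    have h2 : (P ξ).coeff j = c j ξ := by
      simp only [P, Polynomial.finsetSum_coeff, Polynomial.coeff_monomial]
      rw [Finset.sum_ite_eq' p.support j, if_pos hj]
    rw [hP, Polynomial.coeff_zero] at h2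
    simp [← h2]
  · simpa using hj
end

section
/- Let K be a field, let λ_1, …, λ_d be nonzero elements of K, set r_m = ∏_{i=1}^d (λ_i^m − 1), and for n ≥ 2^d let R_n be the 2^d × 2^d Toeplitz matrix with (i,j) entry r_{n−i+j}. Then for every n ≥ 2^d + 1, det R_n · (det R_{2^d})^{n − 2^d − 1} = (det R_{2^d + 1})^{n − 2^d}; that is, the determinants det R_n satisfy det R_n = (det R_{2^d+1})^{n−2^d} / (det R_{2^d})^{n−2^d−1} whenever det R_{2^d} is nonzero. -/
/-- For the `2^d × 2^d` Toeplitz matrices `R_n = (r (n - i + j))` built from the cyclic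
resultants `r m = ∏ (l i ^ m - 1)` of nonzero `l 1, …, l d`, one has for `n ≥ 2^d + 1`:
`det R_n * (det R_{2^d})^(n - 2^d - 1) = (det R_{2^d + 1})^(n - 2^d)`; in particular,
if `det R_{2^d} ≠ 0` then `det R_n = (det R_{2^d+1})^(n-2^d) / (det R_{2^d})^(n-2^d-1)`. -/
theorem cyclic_resultant_toeplitz_det_recursion
    {K : Type*} [Field K] (d : ℕ) (l : Fin d → K) (hl : ∀ i, l i ≠ 0)
    (r : ℕ → K) (hr : ∀ m : ℕ, 1 ≤ m → r m = ∏ i, (l i ^ m - 1))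
    (R : ℕ → Matrix (Fin (2 ^ d)) (Fin (2 ^ d)) K)
    (hR : ∀ n : ℕ, 2 ^ d ≤ n →
      R n = Matrix.of fun i j : Fin (2 ^ d) => r (n - (i : ℕ) + (j : ℕ))) :
    ∀ n : ℕ, 2 ^ d + 1 ≤ n →
      (R n).det * (R (2 ^ d)).det ^ (n - 2 ^ d - 1) = (R (2 ^ d + 1)).det ^ (n - 2 ^ d) ∧
      ((R (2 ^ d)).det ≠ 0 →
        (R n).det = (R (2 ^ d + 1)).det ^ (n - 2 ^ d) / (R (2 ^ d)).det ^ (n - 2 ^ d - 1)) := by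
  classical
  have hcard : Fintype.card (Fin (2 ^ d)) = Fintype.card (Finset (Fin d)) := by simp
  let e : Fin (2 ^ d) ≃ Finset (Fin d) := Fintype.equivOfCardEq hcard
  let mu : Fin (2 ^ d) → K := fun s => ∏ i ∈ e s, l i
  let c : Fin (2 ^ d) → K := fun s => ∏ i ∈ Finset.univ \ e s, (-1 : K)
  have hrm : ∀ m : ℕ, 1 ≤ m → r m = ∑ s, c s * mu s ^ m := by
    intro m hm
    rw [hr m hm]
    simp only [sub_eq_add_neg]
    rw [Finset.prod_add, Finset.powerset_univ, ← Equiv.sum_comp e]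
    refine Finset.sum_congr rfl fun s _ => ?_
    simp only [c, mu, Finset.prod_pow]
    rw [mul_comm]
  let U : Matrix (Fin (2 ^ d)) (Fin (2 ^ d)) K := Matrix.of fun i s => mu s ^ (2 ^ d - 1 - (i : ℕ))
  let W : Matrix (Fin (2 ^ d)) (Fin (2 ^ d)) K := Matrix.of fun s j => mu s ^ (j : ℕ)
  have hfac : ∀ k : ℕ, R (2 ^ d + k) =
      U * Matrix.diagonal (fun s => c s * mu s * mu s ^ k) * W := by
    intro k
    rw [hR _ (Nat.le_add_right _ _)]
    ext i j
    rw [Matrix.mul_apply]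
    simp only [Matrix.mul_diagonal, U, W, Matrix.of_apply]
    have hi := i.isLt
    rw [hrm _ (by omega)]
    refine Finset.sum_congr rfl fun s _ => ?_
    have h : 2 ^ d + k - (i : ℕ) + (j : ℕ) = (2 ^ d - 1 - (i : ℕ)) + 1 + k + j := by omega
    rw [h, pow_add, pow_add, pow_add]
    ring
  have hdet : ∀ k : ℕ, (R (2 ^ d + k)).det = (R (2 ^ d)).det * (∏ s, mu s) ^ k := by
    intro k
    have h0 := hfac 0
    rw [Nat.add_zero] at h0
    rw [hfac k, h0]
    simp only [Matrix.det_mul, Matrix.det_diagonal, Finset.prod_mul_distrib, Finset.prod_pow]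
    ring
  intro n hn
  obtain ⟨k, rfl⟩ : ∃ k, n = 2 ^ d + (k + 1) := ⟨n - 2 ^ d - 1, by omega⟩
  have e1 : 2 ^ d + (k + 1) - 2 ^ d = k + 1 := by omega
  have key : (R (2 ^ d + (k + 1))).det * (R (2 ^ d)).det ^ k =
      (R (2 ^ d + 1)).det ^ (k + 1) := by
    rw [hdet (k + 1), hdet 1]
    ring
  rw [e1, Nat.add_sub_cancel]
  exact ⟨key, fun h => by rw [eq_div_iff (pow_ne_zero _ h)]; exact key⟩
end

section
/- Let K be a field, let λ_1, λ_2 ∈ K, and consider the monic quadratic f(x) = x² + ax + b with a = −(λ_1 + λ_2) and b = λ_1 λ_2, with cyclic resultants r_m = (λ_1^m − 1)(λ_2^m − 1). Then for all n ≥ 1 the following length-3 polynomial recurrence holds: (a+b+1)·[(a−2)r_{n+2} + a(a−b−1)r_{n+1} + (a−2b)b·r_n − (a−b−1)(a+b+1)] = −r_{n+2}² − (a−2b)r_{n+1}r_{n+2} + ab·r_n r_{n+2} + (a−b−1)b·r_{n+1}² − (a−2)b²·r_n r_{n+1} − b³·r_n². -/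
/-- The cyclic resultants `r m = (l₁^m - 1)(l₂^m - 1)` of a monic quadratic
`f(x) = x² + a x + b`, where `a = -(l₁ + l₂)` and `b = l₁ l₂`, satisfy the length-3
polynomial recurrence
`(a+b+1)[(a-2) r_{n+2} + a(a-b-1) r_{n+1} + (a-2b) b r_n - (a-b-1)(a+b+1)]
  = -r_{n+2}² - (a-2b) r_{n+1} r_{n+2} + a b r_n r_{n+2} + (a-b-1) b r_{n+1}²
    - (a-2) b² r_n r_{n+1} - b³ r_n²`. -/
theorem quadratic_cyclic_resultant_recurrence
    {K : Type*} [Field K] (l₁ l₂ a b : K)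
    (ha : a = -(l₁ + l₂)) (hb : b = l₁ * l₂)
    (r : ℕ → K) (hr : ∀ m : ℕ, 1 ≤ m → r m = (l₁ ^ m - 1) * (l₂ ^ m - 1)) :
    ∀ n : ℕ, 1 ≤ n →
      (a + b + 1) * ((a - 2) * r (n + 2) + a * (a - b - 1) * r (n + 1)
          + (a - 2 * b) * b * r n - (a - b - 1) * (a + b + 1)) =
        -(r (n + 2)) ^ 2 - (a - 2 * b) * r (n + 1) * r (n + 2)
          + a * b * r n * r (n + 2) + (a - b - 1) * b * (r (n + 1)) ^ 2
          - (a - 2) * b ^ 2 * r n * r (n + 1) - b ^ 3 * (r n) ^ 2 := by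
  intro n hn
  rw [hr (n + 2) (by omega), hr (n + 1) (by omega), hr n hn, ha, hb]
  simp only [pow_succ l₁, pow_succ l₂]
  generalize l₁ ^ n = x
  generalize l₂ ^ n = y
  ring
end
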